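/- Let (T,f) be a Hubbard tree, let z₁ be the characteristic point of a periodic orbit of branch points of exact period n, with q ≥ 3 arms at each point of the orbit. Then the global arms at z₁ can be labelled G₀, G₁, …, G_{q−1} with c₀ ∈ G₀ and c₁ ∈ G₁, and writing L_i for the local arm contained in G_i: if the orbit is tame, then f^n sends L₀ to L₁, maps each global arm G₁,…,G_{q−2} homeomorphically onto its image inside G₂,…,G_{q−1} respectively, and sends L_{q−1} to L₀; if the orbit is evil, then f^n fixes L₀, maps each of G₁,…,G_{q−2} homeomorphically onto its image inside G₂,…,G_{q−1} respectively, and sends L_{q−1} to L₁, but some iterate f^k(G_{q−1}) with k ≤ n contains c₀. In particular, if the critical orbit is periodic, then its period strictly exceeds the exact period of every periodic branch point. -/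

import Mathlib

/- Common definitions for formalizing "Admissibility of kneading sequences and
structure of Hubbard trees for quadratic polynomials" by Bruin–Schleicher. -/

namespace HubbardTrees

/-- The symbols `0`, `1`, `*` used for itineraries and kneading sequences. -/
inductive Sym : Type
  | zero : Sym
  | one : Sym
  | star : Sym
deriving DecidableEq

/-- `A` is an arc in `X` joining `x` and `y` (a point if `x = y`, otherwise a
homeomorphic image of `[0,1]` with endpoints `x` and `y`). -/
def IsArcBetween {X : Type*} [TopologicalSpace X] (A : Set X) (x y : X) : Prop :=
  (x = y ∧ A = {x}) ∨
  (x ≠ y ∧ ∃ γ : Path x y, Topology.IsEmbedding ⇑γ ∧ Set.range ⇑γ = A)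

/-- The global arms at `x`: the connected components of `X \ {x}`. -/
def arms {X : Type*} [TopologicalSpace X] (x : X) : Set (Set X) :=
  {C | ∃ y, y ≠ x ∧ C = connectedComponentIn {x}ᶜ y}

/-- The global arm at `x` containing `y` (for `y ≠ x`): the component of `X \ {x}`
containing `y`.  Local arms at `x` being germs of global arms, we represent the local
arm at `x` pointing towards `y` by this set. -/
def armTo {X : Type*} [TopologicalSpace X] (x y : X) : Set X :=
  connectedComponentIn {x}ᶜ y

/-- `x` is an endpoint: it has exactly one arm. -/
def IsEndpoint {X : Type*} [TopologicalSpace X] (x : X) : Prop :=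
  (arms x).ncard = 1

/-- `x` is a branch point: it has at least three arms. -/
def IsBranchPt {X : Type*} [TopologicalSpace X] (x : X) : Prop :=
  3 ≤ (arms x).ncard

/-- `f` maps the set `A` homeomorphically onto its image. -/
def MapsHomeoOn {X : Type*} [TopologicalSpace X] (f : X → X) (A : Set X) : Prop :=
  Topology.IsEmbedding (A.restrict f)

/-- `f` is a local homeomorphism onto its image at `x`. -/
def IsLocalHomeoAt {X : Type*} [TopologicalSpace X] (f : X → X) (x : X) : Prop :=
  ∃ U : Set X, IsOpen U ∧ x ∈ U ∧ Topology.IsEmbedding (U.restrict f)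

/-- `g` sends the local arm at `x` represented by the global arm `C` to the local
arm at `g x` represented by `C'` (germ condition: some initial piece of `C` at `x`
is mapped into `C'`). -/
def MapsLocalArm {X : Type*} [TopologicalSpace X] (g : X → X) (x : X) (C C' : Set X) : Prop :=
  C ∈ arms x ∧ C' ∈ arms (g x) ∧ ∃ U ∈ nhds x, g '' (C ∩ U) ⊆ C'

/-- `z` is periodic under `f` with exact period `n`. -/
def ExactPeriod {Y : Type*} (f : Y → Y) (z : Y) (n : ℕ) : Prop :=
  1 ≤ n ∧ f^[n] z = z ∧ ∀ k, 1 ≤ k → k < n → f^[k] z ≠ z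

/-- The first return map `f^[n]` of the fixed point `z` of `f^[n]` permutes all the
local arms at `z` transitively in a single cycle. -/
def ArmsTransitive {X : Type*} [TopologicalSpace X] (f : X → X) (n : ℕ) (z : X) : Prop :=
  ∀ C ∈ arms z, ∀ C' ∈ arms z, ∃ j : ℕ, MapsLocalArm (f^[n * j]) z C C'

/-- An (abstract) Hubbard tree: a finite topological tree `X` together with a
continuous surjection `f` and a critical point `c0`, subject to the axioms of
Bruin–Schleicher. -/
structure HubbardTree (X : Type*) [TopologicalSpace X] : Type _ where
  /-- the dynamics -/
  f : X → X
  /-- the critical point -/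
  c0 : X
  compact : CompactSpace X
  t2 : T2Space X
  conn : ConnectedSpace X
  /-- the unique arc `[x,y]` joining two points -/
  arc : X → X → Set X
  arc_isArc : ∀ x y : X, IsArcBetween (arc x y) x y
  arc_unique : ∀ (x y : X) (A : Set X), IsArcBetween A x y → A = arc x y
  -- finiteness of the tree
  arms_finite : ∀ x : X, (arms x).Finite
  branch_finite : Set.Finite {x : X | IsBranchPt x}
  endpoint_finite : Set.Finite {x : X | IsEndpoint x}
  cont : Continuous f
  surj : Function.Surjective f
  /-- every point has at most two inverse images -/
  two_preimages : ∀ y : X, ∃ a b : X, f ⁻¹' {y} ⊆ {a, b}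
  /-- local homeomorphism onto its image away from the critical point -/
  local_homeo : ∀ x : X, x ≠ c0 → IsLocalHomeoAt f x
  /-- all endpoints lie on the critical orbit -/
  endpoints_on_orbit : ∀ x : X, IsEndpoint x → ∃ k : ℕ, f^[k] c0 = x
  /-- the critical point is periodic or preperiodic -/
  crit_preperiodic : ∃ k n : ℕ, 1 ≤ n ∧ f^[k + n] c0 = f^[k] c0
  /-- the critical point is not fixed -/
  crit_not_fixed : f c0 ≠ c0
  /-- expansivity -/
  expansive : ∀ x y : X, x ≠ y →
    (IsBranchPt x ∨ ∃ k : ℕ, f^[k] c0 = x) →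
    (IsBranchPt y ∨ ∃ k : ℕ, f^[k] c0 = y) →
    ∃ n : ℕ, c0 ∈ f^[n] '' (arc x y)

namespace HubbardTree

variable {X : Type*} [TopologicalSpace X] (H : HubbardTree X)

/-- The critical value `c₁ = f(c₀)`. -/
def c1 : X := H.f H.c0

/-- The component `T₁` of `T \ {c₀}` containing the critical value. -/
def T1 : Set X := connectedComponentIn {H.c0}ᶜ H.c1

open Classical in
/-- The symbol (`0`, `1` or `*`) attached to a point of the tree. -/
noncomputable def symOf (x : X) : Sym :=
  if x = H.c0 then Sym.star else if x ∈ H.T1 then Sym.one else Sym.zero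

/-- The itinerary of `x`: a sequence of symbols, 1-indexed (the value at index `0`
is irrelevant); entry `k ≥ 1` is the symbol of `f^[k-1] x`. -/
noncomputable def itin (x : X) : ℕ → Sym :=
  fun k => H.symOf (H.f^[k - 1] x)

/-- The kneading sequence: the itinerary of the critical value (1-indexed). -/
noncomputable def kneading : ℕ → Sym := H.itin H.c1

/-- `z` is the characteristic point of its periodic orbit: `c₁` lies in one
component of `X \ {z}` while `c₀` and all other points of the orbit lie in a
different component. -/
def IsCharacteristic (z : X) : Prop :=
  ∃ Cv Cz : Set X, Cv ∈ arms z ∧ Cz ∈ arms z ∧ Cv ≠ Cz ∧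
    H.c1 ∈ Cv ∧ H.c0 ∈ Cz ∧ ∀ k : ℕ, H.f^[k] z ≠ z → H.f^[k] z ∈ Cz

/-- The first return map fixes the local arm at `z` pointing to the critical point
and permutes all other local arms transitively in a single cycle. -/
def OtherArmsTransitive (n : ℕ) (z : X) : Prop :=
  ∀ C ∈ arms z, C ≠ armTo z H.c0 → ∀ C' ∈ arms z, C' ≠ armTo z H.c0 →
    ∃ j : ℕ, MapsLocalArm (H.f^[n * j]) z C C'

/-- `z` is the characteristic point of an evil periodic orbit of branch points of
exact period `n`. -/
def IsEvilOrbit (z : X) (n : ℕ) : Prop :=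
  ExactPeriod H.f z n ∧ (∀ k : ℕ, IsBranchPt (H.f^[k] z)) ∧
    H.IsCharacteristic z ∧ ¬ ArmsTransitive H.f n z

/-- `x` is precritical with `Step(x) = k`: `k ≥ 1` is minimal with `f^[k] x = c₁`. -/
def Step (x : X) (k : ℕ) : Prop :=
  1 ≤ k ∧ H.f^[k] x = H.c1 ∧ ∀ j, 1 ≤ j → j < k → H.f^[j] x ≠ H.c1

/-- `x` is the closest precritical point `ζ_k`. -/
def IsClosestPrecritical (x : X) (k : ℕ) : Prop :=
  H.Step x k ∧ ∀ j, 1 ≤ j → j < k → H.c1 ∉ H.f^[j] '' (H.arc H.c1 x)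

/-- `x` is the earliest precritical point on the set `A`, with `Step(x) = k`:
it is a precritical point on `A` of minimal Step. -/
def IsEarliestPrecriticalOn (A : Set X) (x : X) (k : ℕ) : Prop :=
  x ∈ A ∧ H.Step x k ∧ ∀ y ∈ A, ∀ j : ℕ, H.Step y j → k ≤ j

/-- Marked points: branch points and points of the critical orbit. -/
def MarkedPt (x : X) : Prop :=
  IsBranchPt x ∨ ∃ k : ℕ, H.f^[k] H.c0 = x

/-- Two marked points are joined by an edge if the arc between them contains no
further marked point. -/
def IsEdge (x y : X) : Prop :=
  H.MarkedPt x ∧ H.MarkedPt y ∧ x ≠ y ∧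
    ∀ w ∈ H.arc x y, H.MarkedPt w → w = x ∨ w = y

/-- Equivalence of Hubbard trees: a bijection between the marked points which
conjugates the dynamics and preserves edges. -/
def Equivalent {Y : Type*} [TopologicalSpace Y] (H' : HubbardTree Y) : Prop :=
  ∃ φ : X → Y,
    (∀ x : X, H.MarkedPt x → H'.MarkedPt (φ x)) ∧
    (∀ x x' : X, H.MarkedPt x → H.MarkedPt x' → φ x = φ x' → x = x') ∧
    (∀ y : Y, H'.MarkedPt y → ∃ x : X, H.MarkedPt x ∧ φ x = y) ∧
    φ H.c0 = H'.c0 ∧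
    (∀ x : X, H.MarkedPt x → φ (H.f x) = H'.f (φ x)) ∧
    (∀ x x' : X, H.MarkedPt x → H.MarkedPt x' →
      (H.IsEdge x x' ↔ H'.IsEdge (φ x) (φ x')))

end HubbardTree

/-! ### Combinatorics of kneading sequences -/

/-- The function `ρ_ν(n) = inf { k > n : ν_k ≠ ν_{k-n} } ∈ ℕ ∪ {∞}` (sequences are
1-indexed). -/
noncomputable def rho (ν : ℕ → Sym) (n : ℕ) : ℕ∞ :=
  sInf {e : ℕ∞ | ∃ j : ℕ, e = (j : ℕ∞) ∧ n < j ∧ ν j ≠ ν (j - n)}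

/-- `RhoOrbit ν k m` means that `m` belongs to the `ρ`-orbit
`k → ρ(k) → ρ(ρ(k)) → ⋯` of `k` (stopped before reaching `∞`). -/
inductive RhoOrbit (ν : ℕ → Sym) : ℕ → ℕ → Prop
  | refl (k : ℕ) : RhoOrbit ν k k
  | step {k m j : ℕ} : RhoOrbit ν k m → rho ν m = (j : ℕ∞) → RhoOrbit ν k j

/-- `m` occurs in the internal address `1 → ρ(1) → ρ(ρ(1)) → ⋯` of `ν`. -/
def InternalAddress (ν : ℕ → Sym) (m : ℕ) : Prop := RhoOrbit ν 1 m

/-- `ν` is a `*`-periodic kneading sequence of (exact) period `n`: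
`ν = overline(1 ν₂ … ν_{n-1} *)`. -/
def StarPeriodic (ν : ℕ → Sym) (n : ℕ) : Prop :=
  2 ≤ n ∧ ν 1 = Sym.one ∧ ν n = Sym.star ∧
    (∀ k, 1 ≤ k → ν (k + n) = ν k) ∧
    (∀ k, 1 ≤ k → k < n → ν k ≠ Sym.star)

/-- `ν` fails the admissibility condition for period `m`. -/
def FailsAdmissibility (ν : ℕ → Sym) (m : ℕ) : Prop :=
  1 ≤ m ∧
  ¬ InternalAddress ν m ∧
  (∀ k : ℕ, k ∣ m → 1 ≤ k → k < m → rho ν k ≤ (m : ℕ∞)) ∧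
  ∃ R r : ℕ, rho ν m = (R : ℕ∞) ∧ 1 ≤ r ∧ r ≤ m ∧ r ≡ R [MOD m] ∧ RhoOrbit ν r m

open Classical in
/-- The number `q(m)` of arms predicted by the kneading sequence, where
`ρ(m) = R < ∞` and `r ∈ {1,…,m}` is congruent to `R` modulo `m`. -/
noncomputable def qArms (ν : ℕ → Sym) (m R r : ℕ) : ℕ :=
  if RhoOrbit ν r m then (R - r) / m + 1 else (R - r) / m + 2


/-! ### Embeddings into the plane and cyclic order of arms -/

/-- Three points in the plane are in (strictly) counterclockwise position. -/
def Ccw (p q r : ℝ × ℝ) : Prop :=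
  0 < (q.1 - p.1) * (r.2 - p.2) - (q.2 - p.2) * (r.1 - p.1)

namespace HubbardTree

variable {X : Type*} [TopologicalSpace X] (H : HubbardTree X)

/-- Under an embedding `φ` of the tree into the plane, `p` is a first exit point of
the arm `C` at `x` through the circle of radius `ε` around `φ x`: `p = φ y` for a
point `y ∈ C` at distance exactly `ε`, such that the arc from `x` to `y` stays
within distance `< ε` before reaching `y`. -/
def ExitPt (φ : X → ℝ × ℝ) (x : X) (C : Set X) (ε : ℝ) (p : ℝ × ℝ) : Prop :=
  ∃ y ∈ C, φ y = p ∧ dist (φ x) p = ε ∧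
    ∀ z ∈ H.arc x y, z ≠ y → dist (φ x) (φ z) < ε

/-- The local arms at `x` represented by the arms `C, C', C''` are in
counterclockwise cyclic order under the embedding `φ`. -/
def ArmsCcw (φ : X → ℝ × ℝ) (x : X) (C C' C'' : Set X) : Prop :=
  ∃ ε₀ : ℝ, 0 < ε₀ ∧ ∀ ε : ℝ, 0 < ε → ε < ε₀ →
    ∀ p p' p'' : ℝ × ℝ, H.ExitPt φ x C ε p → H.ExitPt φ x C' ε p' →
      H.ExitPt φ x C'' ε p'' → Ccw p p' p''

/-- `f` respects the cyclic order (induced by the embedding `φ`) of the local arms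
at all branch points. -/
def RespectsCyclicOrder (φ : X → ℝ × ℝ) : Prop :=
  ∀ x : X, IsBranchPt x →
    ∀ C C' C'' : Set X, C ∈ arms x → C' ∈ arms x → C'' ∈ arms x →
      C ≠ C' → C' ≠ C'' → C ≠ C'' → H.ArmsCcw φ x C C' C'' →
      ∀ D D' D'' : Set X, MapsLocalArm H.f x C D → MapsLocalArm H.f x C' D' →
        MapsLocalArm H.f x C'' D'' → H.ArmsCcw φ (H.f x) D D' D''

/-- The Hubbard tree can be topologically embedded into the plane `ℝ²` so that `f`
respects the cyclic order of the local arms at all branch points. -/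
def PlanarEmbeddable : Prop :=
  ∃ φ : X → ℝ × ℝ, Topology.IsEmbedding φ ∧ H.RespectsCyclicOrder φ

end HubbardTree

/-!
The first return map `f^[n]` of `z` induces a permutation of the local arms at `z`. By expansivity
every arm at `z` covers `c₀` under some iterate. As long as it does not, its iterates are injective,
so global arms follow local arms. If an arm catches `c₀` before returning, its next image points
towards `c₁`, and from then on it keeps pointing towards `c₁` or another point of the orbit of `z`,
because `z` separates `c₁` from the rest of the orbit; so it returns to the arm of `c₀` or of `c₁`.
Only two local arms have such an image. The arm of `c₀` is one of them, so all arms but one of the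
others map homeomorphically, and the permutation consists of a chain from the arm of `c₁` through
all of them. The orbit is tame if the arm of `c₀` is sent to that of `c₁`, and evil if it is fixed.
-/

section

open Set Topology Function Filter

variable {X Y : Type*} [TopologicalSpace X] [TopologicalSpace Y]

/-! ### Uniquely arcwise connected spaces -/

/-- The space is Hausdorff and uniquely arcwise connected, `arc x y` being the arc `[x, y]`. -/
structure IsUniqueArcs (arc : X → X → Set X) : Prop where
  t2 : T2Space X
  isArcBetween : ∀ x y, IsArcBetween (arc x y) x y
  eq_arc : ∀ x y A, IsArcBetween A x y → A = arc x y

/-- `φ` is injective on some neighbourhood of `x`, as every local homeomorphism onto its image is;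
this makes `φ` act injectively on the local arms at `x`. -/
def LocallyInjectiveAt (φ : X → Y) (x : X) : Prop :=
  ∃ U ∈ 𝓝 x, InjOn φ U

theorem LocallyInjectiveAt.comp {Z : Type*} {ψ : Y → Z} {φ : X → Y} {x : X}
    (hψ : LocallyInjectiveAt ψ (φ x)) (hφ : LocallyInjectiveAt φ x) (hc : ContinuousAt φ x) :
    LocallyInjectiveAt (ψ ∘ φ) x := by
  obtain ⟨V, hV, hVinj⟩ := hψ
  obtain ⟨U, hU, hUinj⟩ := hφ
  exact ⟨U ∩ φ ⁻¹' V, inter_mem hU (hc hV),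
    hVinj.comp (hUinj.mono inter_subset_left) fun _ hp => hp.2⟩

namespace IsUniqueArcs

variable {arc : X → X → Set X} {x y v w : X}

theorem arc_eq_image (hT : IsUniqueArcs arc) {g : ℝ → X} {a b : ℝ} (hab : a ≤ b)
    (hc : ContinuousOn g (Icc a b)) (hi : InjOn g (Icc a b)) :
    arc (g a) (g b) = g '' Icc a b := by
  have := hT.t2
  refine (hT.eq_arc _ _ _ ?_).symm
  rcases hab.eq_or_lt with rfl | hlt
  · exact .inl ⟨rfl, by simp⟩
  let e := (iccHomeoI a b hlt).symm
  have hemb : IsEmbedding ((Icc a b).domRestrict g ∘ e) :=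
    (hc.domRestrict.isClosedEmbedding hi.injective).isEmbedding.comp e.isEmbedding
  let γ : Path (g a) (g b) :=
    { toFun := (Icc a b).domRestrict g ∘ e
      continuous_toFun := hemb.continuous
      source' := by simp [e, domRestrict_apply]
      target' := by simp [e, domRestrict_apply] }
  refine .inr ⟨fun h => hlt.ne (hi (left_mem_Icc.2 hab) (right_mem_Icc.2 hab) h), γ, hemb, ?_⟩
  change range ((Icc a b).domRestrict g ∘ e) = _
  rw [e.surjective.range_comp, range_domRestrict]

-- `b = 0` is allowed so that degenerate arcs need no separate treatment.
theorem exists_param (hT : IsUniqueArcs arc) (x y : X) : ∃ (b : ℝ) (g : ℝ → X), 0 ≤ b ∧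
    Continuous g ∧ InjOn g (Icc 0 b) ∧ g 0 = x ∧ g b = y ∧ arc x y = g '' Icc 0 b := by
  rcases hT.isArcBetween x y with ⟨rfl, h⟩ | ⟨-, γ, hγ, hr⟩
  · exact ⟨0, fun _ => x, le_rfl, continuous_const, by simp, rfl, rfl, by simp [h]⟩
  · refine ⟨1, γ.extend, zero_le_one, γ.continuous_extend, ?_, by simp, by simp, ?_⟩
    · intro s hs t ht hst
      rw [γ.extend_apply hs, γ.extend_apply ht] at hst
      simpa using hγ.injective hst
    · rw [← hr, ← γ.image_extend_of_subset Subset.rfl]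

theorem arc_eq_image_subinterval (hT : IsUniqueArcs arc) {g : ℝ → X} {b s t : ℝ}
    (hc : Continuous g) (hi : InjOn g (Icc 0 b)) (hs : 0 ≤ s) (hst : s ≤ t) (ht : t ≤ b) :
    arc (g s) (g t) = g '' Icc s t :=
  hT.arc_eq_image hst hc.continuousOn (hi.mono (Icc_subset_Icc hs ht))

theorem arc_self (hT : IsUniqueArcs arc) (x : X) : arc x x = {x} :=
  (hT.eq_arc x x {x} (.inl ⟨rfl, rfl⟩)).symm

theorem arc_comm (hT : IsUniqueArcs arc) (x y : X) : arc x y = arc y x := by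
  obtain ⟨b, g, hb, hc, hi, rfl, rfl, h⟩ := hT.exists_param x y
  have himage : (fun t => b - t) '' Icc 0 b = Icc 0 b := by simp
  have hrev := hT.arc_eq_image (g := fun t => g (b - t)) hb (by fun_prop)
    (hi.comp sub_right_injective.injOn fun t ht => himage ▸ mem_image_of_mem _ ht)
  simp only [sub_zero, sub_self] at hrev
  rw [h, hrev, ← image_image g (fun t => b - t), himage]

theorem left_mem (hT : IsUniqueArcs arc) (x y : X) : x ∈ arc x y := by
  obtain ⟨b, g, hb, -, -, rfl, rfl, h⟩ := hT.exists_param x y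
  exact h ▸ mem_image_of_mem g (left_mem_Icc.2 hb)

theorem right_mem (hT : IsUniqueArcs arc) (x y : X) : y ∈ arc x y :=
  hT.arc_comm y x ▸ hT.left_mem y x

theorem isClosed_arc (hT : IsUniqueArcs arc) (x y : X) : IsClosed (arc x y) := by
  have := hT.t2
  obtain ⟨b, g, -, hc, -, -, -, h⟩ := hT.exists_param x y
  exact h ▸ (isCompact_Icc.image hc).isClosed

theorem isPreconnected_arc (hT : IsUniqueArcs arc) (x y : X) : IsPreconnected (arc x y) := by
  obtain ⟨b, g, -, hc, -, -, -, h⟩ := hT.exists_param x y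
  exact h ▸ isPreconnected_Icc.image _ hc.continuousOn

theorem isPreconnected_arc_diff_left (hT : IsUniqueArcs arc) (x y : X) :
    IsPreconnected (arc x y \ {x}) := by
  obtain ⟨b, g, hb, hc, hi, rfl, rfl, h⟩ := hT.exists_param x y
  rw [h, ← image_singleton, ← hi.image_sdiff_subset (by simpa using hb), Icc_sdiff_left]
  exact isPreconnected_Ioc.image _ hc.continuousOn

theorem exists_mem_arc_arc_subset (hT : IsUniqueArcs arc) (hy : y ≠ x) {U : Set X} (hU : U ∈ 𝓝 x) :
    ∃ w ∈ arc x y, w ≠ x ∧ arc x w ⊆ U := by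
  obtain ⟨b, g, hb, hc, hi, rfl, rfl, h⟩ := hT.exists_param x y
  have hb' : 0 < b := hb.lt_of_ne (by rintro rfl; exact hy rfl)
  obtain ⟨ε, hε, hball⟩ := Metric.mem_nhds_iff.1 (hc.continuousAt.preimage_mem_nhds hU)
  have ht : 0 < min b (ε / 2) := lt_min hb' (half_pos hε)
  have htb : min b (ε / 2) ≤ b := min_le_left _ _
  refine ⟨g (min b (ε / 2)), h ▸ mem_image_of_mem g ⟨ht.le, htb⟩,
    fun heq => ht.ne' (hi ⟨ht.le, htb⟩ (left_mem_Icc.2 hb) heq), ?_⟩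
  rw [hT.arc_eq_image_subinterval hc hi le_rfl ht.le htb]
  rintro _ ⟨s, hs, rfl⟩
  refine hball ?_
  rw [Real.ball_eq_Ioo]
  exact ⟨by linarith [hs.1], by linarith [hs.2, min_le_right b (ε / 2)]⟩

theorem arc_eq_union (hT : IsUniqueArcs arc) (hw : w ∈ arc x y) :
    arc x y = arc x w ∪ arc w y := by
  obtain ⟨b, g, -, hc, hi, rfl, rfl, h⟩ := hT.exists_param x y
  obtain ⟨t, ht, rfl⟩ := h ▸ hw
  rw [h, hT.arc_eq_image_subinterval hc hi le_rfl ht.1 ht.2,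
    hT.arc_eq_image_subinterval hc hi ht.1 ht.2 le_rfl, ← image_union,
    Icc_union_Icc_eq_Icc ht.1 ht.2]

theorem arc_subset_left (hT : IsUniqueArcs arc) (hw : w ∈ arc x y) : arc x w ⊆ arc x y :=
  hT.arc_eq_union hw ▸ subset_union_left

theorem left_notMem_arc (hT : IsUniqueArcs arc) (hw : w ∈ arc x y) (hne : w ≠ x) :
    x ∉ arc w y := by
  obtain ⟨b, g, hb, hc, hi, rfl, rfl, h⟩ := hT.exists_param x y
  obtain ⟨t, ht, rfl⟩ := h ▸ hw
  rw [hT.arc_eq_image_subinterval hc hi ht.1 ht.2 le_rfl]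
  rintro ⟨s, hs, hgs⟩
  have hs0 : s = 0 := hi ⟨ht.1.trans hs.1, hs.2⟩ (left_mem_Icc.2 hb) hgs
  exact hne (congrArg g (le_antisymm (hs0 ▸ hs.1) ht.1))

theorem mem_arc_or_mem_arc (hT : IsUniqueArcs arc) (hv : v ∈ arc x y) (hw : w ∈ arc x y) :
    v ∈ arc x w ∨ w ∈ arc x v := by
  obtain ⟨b, g, -, hc, hi, rfl, rfl, h⟩ := hT.exists_param x y
  obtain ⟨s, hs, rfl⟩ := h ▸ hv
  obtain ⟨t, ht, rfl⟩ := h ▸ hw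
  rw [hT.arc_eq_image_subinterval hc hi le_rfl ht.1 ht.2,
    hT.arc_eq_image_subinterval hc hi le_rfl hs.1 hs.2]
  exact (le_total s t).imp (fun hst => ⟨s, ⟨hs.1, hst⟩, rfl⟩) fun hts => ⟨t, ⟨ht.1, hts⟩, rfl⟩

-- Otherwise the two halves of the simple closed curve would be distinct arcs with the same ends.
theorem ne_of_injOn_Ico (hT : IsUniqueArcs arc) {g : ℝ → X} {s t : ℝ} (hst : s < t)
    (hc : ContinuousOn g (Icc s t)) (hi : InjOn g (Ico s t)) : g s ≠ g t := by
  intro hg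
  have hi' : InjOn g (Ioc s t) := by
    rw [← Ioo_insert_right hst, injOn_insert right_notMem_Ioo]
    refine ⟨hi.mono Ioo_subset_Ico_self, ?_⟩
    rintro ⟨u, hu, hgu⟩
    exact hu.1.ne' (hi ⟨hu.1.le, hu.2⟩ (left_mem_Ico.2 hst) (hgu.trans hg.symm))
  obtain ⟨m, hsm, hmt⟩ := exists_between hst
  obtain ⟨u, hsu, hum⟩ := exists_between hsm
  have hfirst := hT.arc_eq_image hsm.le (hc.mono (Icc_subset_Icc_right hmt.le))
    (hi.mono (Icc_subset_Ico_right hmt))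
  have hsecond := hT.arc_eq_image hmt.le (hc.mono (Icc_subset_Icc_left hsm.le))
    (hi'.mono (Icc_subset_Ioc_iff hmt.le |>.2 ⟨hsm, le_rfl⟩))
  rw [hT.arc_comm, ← hg, hfirst] at hsecond
  obtain ⟨r, hr, hgr⟩ := hsecond ▸ mem_image_of_mem g (⟨hsu.le, hum.le⟩ : u ∈ Icc s m)
  have hru : r = u := hi' ⟨hsm.trans_le hr.1, hr.2⟩ ⟨hsu, (hum.trans hmt).le⟩ hgr
  exact (hum.trans_le hr.1).ne' hru

theorem injOn_Icc_of_injOn_Ioo (hT : IsUniqueArcs arc) {g : ℝ → X} {a b : ℝ} (hab : a < b)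
    (hc : ContinuousOn g (Icc a b)) (hi : InjOn g (Ioo a b)) : InjOn g (Icc a b) := by
  have hIco : InjOn g (Ico a b) := by
    rw [← Ioo_insert_left hab, injOn_insert left_notMem_Ioo]
    refine ⟨hi, ?_⟩
    rintro ⟨u, hu, hgu⟩
    refine hT.ne_of_injOn_Ico hu.1 (hc.mono (Icc_subset_Icc_right hu.2.le)) ?_ hgu.symm
    rw [← Ioo_insert_left hu.1, injOn_insert left_notMem_Ioo]
    refine ⟨hi.mono (Ioo_subset_Ioo_right hu.2.le), ?_⟩
    rintro ⟨v, hv, hgv⟩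
    exact hv.2.ne (hi ⟨hv.1, hv.2.trans hu.2⟩ hu (hgv.trans hgu.symm))
  rw [← Ico_insert_right hab.le, injOn_insert right_notMem_Ico]
  refine ⟨hIco, ?_⟩
  rintro ⟨u, hu, hgu⟩
  exact hT.ne_of_injOn_Ico hu.2 (hc.mono (Icc_subset_Icc_left hu.1))
    (hIco.mono (Ico_subset_Ico_left hu.1)) hgu

end IsUniqueArcs

theorem isCompact_doublePoints [T2Space X] {g : ℝ → X} {s t : ℝ} (hc : Continuous g)
    (hl : ∀ u ∈ Icc s t, LocallyInjectiveAt g u) :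
    IsCompact {p : ℝ × ℝ | p ∈ Icc s t ×ˢ Icc s t ∧ p.1 < p.2 ∧ g p.1 = g p.2} := by
  choose! V hV hVinj using hl
  let W : Set (ℝ × ℝ) := ⋃ u ∈ Icc s t, interior (V u) ×ˢ interior (V u)
  have hW : IsOpen W := isOpen_biUnion fun u _ => isOpen_interior.prod isOpen_interior
  have hclosed : IsClosed ({p : ℝ × ℝ | p.1 ≤ p.2 ∧ g p.1 = g p.2} ∩ Wᶜ) :=
    ((isClosed_le continuous_fst continuous_snd).inter
      (isClosed_eq (hc.comp continuous_fst) (hc.comp continuous_snd))).inter hW.isClosed_compl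
  have hsquare : IsCompact (Icc s t ×ˢ Icc s t) := isCompact_Icc.prod isCompact_Icc
  convert hsquare.inter_right hclosed using 1
  ext ⟨u, v⟩
  refine and_congr_right fun huv => ⟨fun h => ⟨⟨h.1.le, h.2⟩, fun hmem => ?_⟩, fun h =>
    ⟨lt_of_le_of_ne h.1.1 ?_, h.1.2⟩⟩
  · obtain ⟨r, hr, hur, hvr⟩ := mem_iUnion₂.1 hmem
    exact h.1.ne (hVinj r hr (interior_subset hur) (interior_subset hvr) h.2)
  · rintro (rfl : u = v)
    have hu := mem_interior_iff_mem_nhds.2 (hV u huv.1)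
    exact h.2 (mem_iUnion₂.2 ⟨u, huv.1, hu, hu⟩)

namespace IsUniqueArcs

variable {arc : X → X → Set X} {arcY : Y → Y → Set Y} {x y : X}

-- A closest pair of parameters with the same image would bound a simple closed curve.
theorem injOn_Icc_of_locallyInjectiveAt (hT : IsUniqueArcs arc) {g : ℝ → X} {s t : ℝ}
    (hc : Continuous g) (hl : ∀ u ∈ Icc s t, LocallyInjectiveAt g u) : InjOn g (Icc s t) := by
  have := hT.t2
  rw [injOn_iff_injective]
  refine .of_lt_imp_ne fun u v huv hg => ?_
  obtain ⟨⟨a, b⟩, ⟨⟨ha, hb⟩, hab, hgab⟩, hmin⟩ := (isCompact_doublePoints hc hl).exists_isMinOn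
    ⟨(u.1, v.1), ⟨u.2, v.2⟩, huv, hg⟩ (f := fun p : ℝ × ℝ => p.2 - p.1) (by fun_prop)
  refine hT.ne_of_injOn_Ico hab hc.continuousOn ?_ hgab
  rw [injOn_iff_injective]
  refine .of_lt_imp_ne fun c d hcd hgcd => ?_
  have hle : b - a ≤ d.1 - c.1 := hmin (a := (c.1, d.1))
    ⟨⟨⟨ha.1.trans c.2.1, c.2.2.le.trans hb.2⟩, ha.1.trans d.2.1, d.2.2.le.trans hb.2⟩, hcd, hgcd⟩
  linarith [c.2.1, d.2.2]

theorem injOn_arc (hX : IsUniqueArcs arc) (hY : IsUniqueArcs arcY) {φ : X → Y}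
    (hφ : Continuous φ)
    (hl : ∀ p ∈ arc x y, p ≠ x → p ≠ y → LocallyInjectiveAt φ p) : InjOn φ (arc x y) := by
  obtain ⟨b, g, hb, hc, hi, rfl, rfl, h⟩ := hX.exists_param x y
  rw [h] at hl ⊢
  rcases hb.eq_or_lt with rfl | hb'
  · simp
  refine InjOn.image_of_comp ?_
  refine hY.injOn_Icc_of_injOn_Ioo hb' (hφ.comp hc).continuousOn fun u hu v hv huv => ?_
  refine hY.injOn_Icc_of_locallyInjectiveAt (hφ.comp hc) (fun r hr => ?_)
    (left_mem_uIcc : u ∈ uIcc u v) right_mem_uIcc huv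
  have hr : r ∈ Ioo 0 b := ⟨(lt_min hu.1 hv.1).trans_le hr.1, hr.2.trans_lt (max_lt hu.2 hv.2)⟩
  have hr' : r ∈ Icc 0 b := Ioo_subset_Icc_self hr
  refine (hl (g r) (mem_image_of_mem g hr') (fun h0 => ?_) fun h1 => ?_).comp
    ⟨Icc 0 b, Icc_mem_nhds hr.1 hr.2, hi⟩ hc.continuousAt
  · exact hr.1.ne' (hi hr' (left_mem_Icc.2 hb) h0)
  · exact hr.2.ne (hi hr' (right_mem_Icc.2 hb) h1)

theorem image_arc (hX : IsUniqueArcs arc) (hY : IsUniqueArcs arcY) {φ : X → Y}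
    (hφ : Continuous φ) (hi : InjOn φ (arc x y)) : φ '' arc x y = arcY (φ x) (φ y) := by
  obtain ⟨b, g, hb, hc, hg, rfl, rfl, h⟩ := hX.exists_param x y
  rw [h] at hi ⊢
  rw [← image_comp]
  exact (hY.arc_eq_image hb (hφ.comp hc).continuousOn (hi.comp hg (mapsTo_image g _))).symm

end IsUniqueArcs

/-! ### Arms -/

section Arms

variable {x y : X} {C D S : Set X}

theorem mem_armTo (h : y ≠ x) : y ∈ armTo x y :=
  mem_connectedComponentIn h

theorem armTo_mem_arms (h : y ≠ x) : armTo x y ∈ arms x :=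
  ⟨y, h, rfl⟩

theorem self_notMem_armTo (x y : X) : x ∉ armTo x y :=
  fun h => connectedComponentIn_subset _ _ h rfl

theorem isPreconnected_arm (hC : C ∈ arms x) : IsPreconnected C := by
  obtain ⟨y, -, rfl⟩ := hC
  exact isPreconnected_connectedComponentIn

theorem nonempty_of_mem_arms (hC : C ∈ arms x) : C.Nonempty := by
  obtain ⟨y, hy, rfl⟩ := hC
  exact ⟨y, mem_armTo hy⟩

theorem eq_armTo_of_mem (hC : C ∈ arms x) (hy : y ∈ C) : C = armTo x y := by
  obtain ⟨w, -, rfl⟩ := hC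
  exact connectedComponentIn_eq hy

theorem ne_of_mem_arm (hC : C ∈ arms x) (hy : y ∈ C) : y ≠ x := by
  rintro rfl
  exact self_notMem_armTo y y (eq_armTo_of_mem hC hy ▸ hy)

theorem arm_eq_of_mem_of_mem (hC : C ∈ arms x) (hD : D ∈ arms x) (hyC : y ∈ C) (hyD : y ∈ D) :
    C = D :=
  (eq_armTo_of_mem hC hyC).trans (eq_armTo_of_mem hD hyD).symm

theorem subset_arm (hC : C ∈ arms x) (hS : IsPreconnected S) (hyS : y ∈ S) (hyC : y ∈ C)
    (hx : x ∉ S) : S ⊆ C :=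
  eq_armTo_of_mem hC hyC ▸
    hS.subset_connectedComponentIn hyS (subset_compl_singleton_iff.2 hx)

theorem closure_arm_subset (hC : C ∈ arms x) : closure C ⊆ insert x C := by
  obtain ⟨y, hy⟩ := nonempty_of_mem_arms hC
  have hxC : x ∉ C := fun h => ne_of_mem_arm hC h rfl
  have hpre : IsPreconnected (closure C \ {x}) :=
    (isPreconnected_arm hC).subset_closure (subset_sdiff_singleton subset_closure hxC)
      sdiff_subset
  rw [← sdiff_singleton_subset_iff]
  exact subset_arm hC hpre ⟨subset_closure hy, ne_of_mem_arm hC hy⟩ hy fun h => h.2 rfl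

theorem isClosed_insert_arm [T1Space X] (hC : C ∈ arms x) : IsClosed (insert x C) := by
  rw [← closure_subset_iff_isClosed, insert_eq, closure_union, closure_singleton]
  exact union_subset subset_union_left (closure_arm_subset hC)

end Arms

namespace IsUniqueArcs

variable {arc : X → X → Set X} {x y : X} {C : Set X}

theorem arc_diff_subset_arm (hT : IsUniqueArcs arc) (hC : C ∈ arms x) (hy : y ∈ C) :
    arc x y \ {x} ⊆ C :=
  subset_arm hC (hT.isPreconnected_arc_diff_left x y) ⟨hT.right_mem x y, ne_of_mem_arm hC hy⟩ hy
    fun h => h.2 rfl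

theorem arc_subset_insert_arm (hT : IsUniqueArcs arc) (hC : C ∈ arms x) (hy : y ∈ C) :
    arc x y ⊆ insert x C :=
  sdiff_singleton_subset_iff.1 (hT.arc_diff_subset_arm hC hy)

theorem arc_subset_insert_arm_of_mem_of_mem (hT : IsUniqueArcs arc) (hC : C ∈ arms x) {a b : X}
    (ha : a ∈ insert x C) (hb : b ∈ insert x C) : arc a b ⊆ insert x C := by
  have hfrom : ∀ {c}, c ∈ insert x C → arc x c ⊆ insert x C := by
    rintro c (rfl | hc)
    · simp [hT.arc_self]
    · exact hT.arc_subset_insert_arm hC hc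
  by_cases hx : x ∈ arc a b
  · rw [hT.arc_eq_union hx, hT.arc_comm a x]
    exact union_subset (hfrom ha) (hfrom hb)
  · have haC : a ∈ C := ha.resolve_left fun h => hx (h ▸ hT.left_mem a b)
    exact (subset_arm hC (hT.isPreconnected_arc a b) (hT.left_mem a b) haC hx).trans
      (subset_insert x C)

theorem exists_mem_arm_arc_subset (hT : IsUniqueArcs arc) (hC : C ∈ arms x) {U : Set X}
    (hU : U ∈ 𝓝 x) : ∃ y ∈ C, arc x y ⊆ U := by
  obtain ⟨y, hy⟩ := nonempty_of_mem_arms hC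
  obtain ⟨w, hw, hwx, hwU⟩ := hT.exists_mem_arc_arc_subset (ne_of_mem_arm hC hy) hU
  exact ⟨w, hT.arc_diff_subset_arm hC hy ⟨hw, hwx⟩, hwU⟩

theorem mem_closure_arm (hT : IsUniqueArcs arc) (hC : C ∈ arms x) : x ∈ closure C := by
  refine mem_closure_iff_nhds.2 fun U hU => ?_
  obtain ⟨y, hy, hyU⟩ := hT.exists_mem_arm_arc_subset hC hU
  exact ⟨y, hyU (hT.right_mem x y), hy⟩

theorem isPreconnected_insert_arm (hT : IsUniqueArcs arc) (hC : C ∈ arms x) :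
    IsPreconnected (insert x C) :=
  (isPreconnected_arm hC).subset_closure (subset_insert x C)
    (insert_subset (hT.mem_closure_arm hC) subset_closure)

end IsUniqueArcs

/-! ### Finite trees -/

/-- The points that `y` separates from `x`, including `y`, in a tree rooted at `x`. -/
def beyond (x y : X) : Set X := (armTo y x)ᶜ

theorem self_mem_beyond (x y : X) : y ∈ beyond x y :=
  self_notMem_armTo y x

theorem root_notMem_beyond {x y : X} (hy : y ≠ x) : x ∉ beyond x y :=
  not_not.2 (mem_armTo hy.symm)

theorem beyond_subset_beyond {x y w : X} (hy : y ≠ x) (hw : w ∈ beyond x y) :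
    beyond x w ⊆ beyond x y := by
  have hwx : w ≠ x := fun h => root_notMem_beyond hy (h ▸ hw)
  exact compl_subset_compl.2 (subset_arm (armTo_mem_arms hwx.symm)
    (isPreconnected_arm (armTo_mem_arms hy.symm)) (mem_armTo hy.symm) (mem_armTo hwx.symm) hw)

theorem IsUniqueArcs.eq_of_mem_beyond {arc : X → X → Set X} (hT : IsUniqueArcs arc) {x y w : X}
    (hy : y ≠ x) (hw : w ∈ beyond x y) (hyw : y ∈ beyond x w) : w = y := by
  by_contra hne
  have hwx : w ≠ x := fun h => root_notMem_beyond hy (h ▸ hw)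
  have hyarm := armTo_mem_arms hy.symm
  exact hyw (subset_arm (armTo_mem_arms hwx.symm) (hT.isPreconnected_insert_arm hyarm)
    (.inr (mem_armTo hy.symm)) (mem_armTo hwx.symm) (not_or.2 ⟨hne, hw⟩) (.inl rfl))

theorem isEndpoint_of_beyond_eq_singleton {x e : X} (hex : e ≠ x) (he : beyond x e = {e}) :
    IsEndpoint e := by
  have harm : armTo e x = {e}ᶜ := compl_eq_comm.1 he |>.symm
  refine ncard_eq_one.2 ⟨armTo e x, Subset.antisymm (fun C hC => ?_)
    (singleton_subset_iff.2 (armTo_mem_arms hex.symm))⟩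
  obtain ⟨y, hy⟩ := nonempty_of_mem_arms hC
  exact arm_eq_of_mem_of_mem hC (armTo_mem_arms hex.symm) hy (harm ▸ ne_of_mem_arm hC hy)

/-- The space is a finite tree with arcs `[x, y] = arc x y`, finiteness being encoded by
compactness together with finite numbers of arms at each point and of endpoints. -/
structure IsFiniteTree (arc : X → X → Set X) : Prop extends IsUniqueArcs arc where
  compactSpace : CompactSpace X
  arms_finite : ∀ x : X, (arms x).Finite
  endpoint_finite : {x : X | IsEndpoint x}.Finite

namespace IsFiniteTree

variable {arc : X → X → Set X} {x y p : X} {C : Set X}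

theorem isOpen_arm (hT : IsFiniteTree arc) (hC : C ∈ arms x) : IsOpen C := by
  have := hT.t2
  have hcompl : Cᶜ = {x} ∪ ⋃ D ∈ arms x \ {C}, insert x D := by
    ext p
    simp only [mem_compl_iff, mem_union, mem_singleton_iff, mem_iUnion, mem_insert_iff,
      exists_prop, Set.mem_sdiff]
    constructor
    · refine fun hp => or_iff_not_imp_left.2 fun hpx => ?_
      exact ⟨armTo x p, ⟨armTo_mem_arms hpx, fun h => hp (h ▸ mem_armTo hpx)⟩,
        .inr (mem_armTo hpx)⟩
    · rintro (rfl | ⟨D, ⟨hD, hDC⟩, rfl | hp⟩) hpC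
      · exact ne_of_mem_arm hC hpC rfl
      · exact ne_of_mem_arm hC hpC rfl
      · exact hDC (arm_eq_of_mem_of_mem hD hC hp hpC)
  rw [← isClosed_compl_iff, hcompl]
  exact isClosed_singleton.union (((hT.arms_finite x).subset sdiff_subset).isClosed_biUnion
    fun D hD => isClosed_insert_arm hD.1)

theorem isClosed_beyond (hT : IsFiniteTree arc) (hy : y ≠ x) : IsClosed (beyond x y) :=
  (hT.isOpen_arm (armTo_mem_arms hy.symm)).isClosed_compl

theorem exists_beyond_eq_singleton (hT : IsFiniteTree arc) (hp : p ≠ x) :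
    ∃ e ∈ beyond x p, beyond x e = {e} := by
  have := hT.compactSpace
  have hne : ∀ {w}, w ∈ beyond x p → w ≠ x := fun hw h => root_notMem_beyond hp (h ▸ hw)
  have hchains : ∀ c ⊆ beyond x '' beyond x p, IsChain (· ⊆ ·) c → c.Nonempty →
      ∃ lb ∈ beyond x '' beyond x p, ∀ s ∈ c, lb ⊆ s := by
    intro c hc hchain hcne
    obtain ⟨w, hw⟩ : (⋂₀ c).Nonempty := by
      have := hcne.to_subtype
      have hdir : DirectedOn (fun s t : Set X => s ⊇ t) c :=
        IsChain.directedOn (r := fun s t : Set X => s ⊇ t) hchain.symm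
      refine IsCompact.nonempty_sInter_of_directed_nonempty_isCompact_isClosed hdir ?_ ?_ ?_ <;>
        intro s hs <;> obtain ⟨u, hu, rfl⟩ := hc hs
      · exact ⟨u, self_mem_beyond x u⟩
      · exact (hT.isClosed_beyond (hne hu)).isCompact
      · exact hT.isClosed_beyond (hne hu)
    have hlower : ∀ s ∈ c, w ∈ beyond x p ∧ beyond x w ⊆ s := by
      intro s hs
      obtain ⟨u, hu, rfl⟩ := hc hs
      exact ⟨beyond_subset_beyond hp hu (hw _ hs), beyond_subset_beyond (hne hu) (hw _ hs)⟩
    obtain ⟨s, hs⟩ := hcne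
    exact ⟨beyond x w, mem_image_of_mem _ (hlower s hs).1, fun s hs => (hlower s hs).2⟩
  obtain ⟨-, -, ⟨e, he, rfl⟩, hmin⟩ := zorn_superset_nonempty _ hchains (beyond x p)
    (mem_image_of_mem _ (self_mem_beyond x p))
  refine ⟨e, he, Subset.antisymm (fun w hw => ?_) (singleton_subset_iff.2 (self_mem_beyond x e))⟩
  have hwp : w ∈ beyond x p := beyond_subset_beyond hp he hw
  exact hT.eq_of_mem_beyond (hne he) hw (hmin (mem_image_of_mem _ hwp)
    (beyond_subset_beyond (hne he) hw) (self_mem_beyond x e))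

theorem exists_isEndpoint_mem_arc (hT : IsFiniteTree arc) (hp : p ≠ x) :
    ∃ e, IsEndpoint e ∧ p ∈ arc x e := by
  obtain ⟨e, hep, he⟩ := hT.exists_beyond_eq_singleton hp
  have hex : e ≠ x := fun h => root_notMem_beyond hp (h ▸ hep)
  refine ⟨e, isEndpoint_of_beyond_eq_singleton hex he, ?_⟩
  by_contra hpe
  exact hep (subset_arm (armTo_mem_arms hp.symm) (hT.isPreconnected_arc x e) (hT.left_mem x e)
    (mem_armTo hp.symm) hpe (hT.right_mem x e))

theorem exists_isEndpoint_mem_arm (hT : IsFiniteTree arc) (hC : C ∈ arms x) :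
    ∃ e ∈ C, IsEndpoint e := by
  obtain ⟨p, hp⟩ := nonempty_of_mem_arms hC
  obtain ⟨e, he, hpe⟩ := hT.exists_isEndpoint_mem_arc (ne_of_mem_arm hC hp)
  have hx : x ∉ arc p e := hT.left_notMem_arc hpe (ne_of_mem_arm hC hp)
  exact ⟨e, subset_arm hC (hT.isPreconnected_arc p e) (hT.left_mem p e) hp hx
    (hT.right_mem p e), he⟩

end IsFiniteTree

/-- The arcs from `x` to `a` and to `b` start out along a common nondegenerate arc. -/
def ShareInitialArc {α : Type*} (arc : α → α → Set α) (x a b : α) : Prop :=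
  ∃ w ≠ x, w ∈ arc x a ∧ w ∈ arc x b

theorem ShareInitialArc.symm {α : Type*} {arc : α → α → Set α} {x a b : α}
    (h : ShareInitialArc arc x a b) : ShareInitialArc arc x b a :=
  let ⟨w, hwx, hwa, hwb⟩ := h
  ⟨w, hwx, hwb, hwa⟩

namespace IsUniqueArcs

variable {arc : X → X → Set X} {x p a b c : X} {C : Set X}

theorem shareInitialArc_of_mem (hT : IsUniqueArcs arc) (hp : p ≠ x) (hpa : p ∈ arc x a) :
    ShareInitialArc arc x p a :=
  ⟨p, hp, hT.right_mem x p, hpa⟩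

theorem shareInitialArc_trans (hT : IsUniqueArcs arc) (hab : ShareInitialArc arc x a b)
    (hbc : ShareInitialArc arc x b c) : ShareInitialArc arc x a c := by
  obtain ⟨v, hvx, hva, hvb⟩ := hab
  obtain ⟨w, hwx, hwb, hwc⟩ := hbc
  rcases hT.mem_arc_or_mem_arc hvb hwb with hvw | hwv
  · exact ⟨v, hvx, hva, hT.arc_subset_left hwc hvw⟩
  · exact ⟨w, hwx, hT.arc_subset_left hva hwv, hwc⟩

theorem arm_eq_of_shareInitialArc (hT : IsUniqueArcs arc) {D : Set X} (hC : C ∈ arms x)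
    (hD : D ∈ arms x) (ha : a ∈ C) (hb : b ∈ D) (hab : ShareInitialArc arc x a b) : C = D := by
  obtain ⟨w, hwx, hwa, hwb⟩ := hab
  exact arm_eq_of_mem_of_mem hC hD (hT.arc_diff_subset_arm hC ha ⟨hwa, hwx⟩)
    (hT.arc_diff_subset_arm hD hb ⟨hwb, hwx⟩)

end IsUniqueArcs

namespace IsFiniteTree

variable {arc : X → X → Set X} {x y a b : X} {C : Set X}

-- Up to `x`, the set is the union of the arcs from `x` to the endpoints satisfying `P`.
theorem isClosed_of_shareInitialArc_invariant (hT : IsFiniteTree arc) {P : X → Prop}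
    (hP : ∀ a b, ShareInitialArc arc x a b → P a → P b) : IsClosed {p | p = x ∨ P p} := by
  have := hT.t2
  have hunion : {p | p = x ∨ P p} = {x} ∪ ⋃ e ∈ {e | IsEndpoint e ∧ P e}, arc x e := by
    ext p
    simp only [mem_ofPred_eq, mem_union, mem_singleton_iff, mem_iUnion, exists_prop]
    rcases eq_or_ne p x with rfl | hp
    · simp
    simp only [hp, false_or]
    constructor
    · intro hPp
      obtain ⟨e, he, hpe⟩ := hT.exists_isEndpoint_mem_arc hp
      exact ⟨e, ⟨he, hP p e (hT.shareInitialArc_of_mem hp hpe) hPp⟩, hpe⟩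
    · rintro ⟨e, ⟨-, hPe⟩, hpe⟩
      exact hP e p (hT.shareInitialArc_of_mem hp hpe).symm hPe
  rw [hunion]
  exact isClosed_singleton.union ((hT.endpoint_finite.subset fun e he => he.1).isClosed_biUnion
    fun e _ => hT.isClosed_arc x e)

theorem shareInitialArc_of_mem_arm (hT : IsFiniteTree arc) (hC : C ∈ arms x) (ha : a ∈ C)
    (hb : b ∈ C) : ShareInitialArc arc x a b := by
  have hx : ∀ {p}, p ∈ C → p ≠ x := ne_of_mem_arm hC
  have hshare := hT.isClosed_of_shareInitialArc_invariant (x := x) (P := ShareInitialArc arc x a)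
    fun p q hpq hp => hT.shareInitialArc_trans hp hpq
  have hnot := hT.isClosed_of_shareInitialArc_invariant (x := x)
    (P := fun p => ¬ ShareInitialArc arc x a p)
    fun p q hpq hp hq => hp (hT.shareInitialArc_trans hq hpq.symm)
  rcases isPreconnected_iff_subset_of_disjoint_closed.1 (isPreconnected_arm hC) _ _ hshare hnot
    (fun p _ => (em (ShareInitialArc arc x a p)).imp .inr .inr)
    (eq_empty_of_forall_notMem fun p ⟨hpC, hp, hp'⟩ =>
      hp'.resolve_left (hx hpC) (hp.resolve_left (hx hpC))) with h | h
  · exact (h hb).resolve_left (hx hb)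
  · exact ((h ha).resolve_left (hx ha) (hT.shareInitialArc_of_mem (hx ha) (hT.right_mem x a))).elim

theorem eventually_mem_arc (hT : IsFiniteTree arc) (hC : C ∈ arms x) (hy : y ∈ C) :
    ∀ᶠ p in 𝓝 x, p ∈ C → p ∈ arc x y := by
  have hend : ∀ e ∈ {e : X | IsEndpoint e}, ∀ᶠ p in 𝓝 x, p ∈ C → p ∈ arc x e → p ∈ arc x y := by
    intro e _
    by_cases hye : ShareInitialArc arc x y e
    · obtain ⟨w, hwx, hwy, hwe⟩ := hye
      filter_upwards [(hT.isClosed_arc w e).compl_mem_nhds (hT.left_notMem_arc hwe hwx)]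
        with p hp _ hpe
      rw [hT.arc_eq_union hwe] at hpe
      exact hT.arc_subset_left hwy (hpe.resolve_right hp)
    · refine .of_forall fun p hpC hpe => (hye ?_).elim
      exact hT.shareInitialArc_trans (hT.shareInitialArc_of_mem_arm hC hy hpC)
        (hT.shareInitialArc_of_mem (ne_of_mem_arm hC hpC) hpe)
  filter_upwards [(eventually_all_finite hT.endpoint_finite).2 hend] with p hp hpC
  obtain ⟨e, he, hpe⟩ := hT.exists_isEndpoint_mem_arc (ne_of_mem_arm hC hpC)
  exact hp e he hpC hpe

end IsFiniteTree

/-! ### Local arms and their images -/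

theorem mapsLocalArm_iff_eventually {φ : X → X} {x : X} {C D : Set X} :
    MapsLocalArm φ x C D ↔ C ∈ arms x ∧ D ∈ arms (φ x) ∧ ∀ᶠ p in 𝓝 x, p ∈ C → φ p ∈ D := by
  refine and_congr_right fun _ => and_congr_right fun _ => ?_
  simp only [eventually_iff_exists_mem, image_subset_iff]
  exact exists_congr fun U => and_congr_right fun _ =>
    ⟨fun h p hpU hpC => h ⟨hpC, hpU⟩, fun h p hp => h p hp.2 hp.1⟩

theorem mapsLocalArm_id {x : X} {C : Set X} (hC : C ∈ arms x) : MapsLocalArm id x C C :=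
  mapsLocalArm_iff_eventually.2 ⟨hC, hC, .of_forall fun _ => id⟩

theorem MapsLocalArm.comp {ψ φ : X → X} {x : X} {C D E : Set X}
    (hψ : MapsLocalArm ψ (φ x) D E) (hφ : MapsLocalArm φ x C D) (hc : ContinuousAt φ x) :
    MapsLocalArm (ψ ∘ φ) x C E := by
  rw [mapsLocalArm_iff_eventually] at hψ hφ ⊢
  refine ⟨hφ.1, hψ.2.1, ?_⟩
  filter_upwards [hφ.2.2, hc.eventually hψ.2.2] with p hp hp' hpC
  exact hp' (hp hpC)

theorem mapsHomeoOn_of_subset_isCompact [T2Space X] {φ : X → X} (hφ : Continuous φ)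
    {C K : Set X} (hK : IsCompact K) (hCK : C ⊆ K) (hi : InjOn φ K) : MapsHomeoOn φ C := by
  have := isCompact_iff_compactSpace.1 hK
  have hemb : IsEmbedding (K.domRestrict φ) :=
    (hφ.continuousOn.domRestrict.isClosedEmbedding hi.injective).isEmbedding
  exact hemb.comp (IsEmbedding.inclusion hCK)

/-- `π` is the permutation of local arms induced at the fixed point `z` of `φ`. -/
def IsArmReturnMap (φ : X → X) (z : X) (π : arms z → arms z) : Prop :=
  ∀ C : arms z, MapsLocalArm φ z C (π C)

theorem IsArmReturnMap.iterate {φ : X → X} {z : X} {π : arms z → arms z}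
    (h : IsArmReturnMap φ z π) (hz : φ z = z) (hφ : Continuous φ) (j : ℕ) :
    IsArmReturnMap φ^[j] z π^[j] := by
  induction j with
  | zero => exact fun C => mapsLocalArm_id C.2
  | succ j ih =>
    intro C
    have hnext : MapsLocalArm φ^[j] (φ z) (π C) (π^[j] (π C)) := hz.symm ▸ ih (π C)
    exact hnext.comp (h C) hφ.continuousAt

namespace IsUniqueArcs

variable {arc : X → X → Set X} {φ : X → X} {x : X} {C D E : Set X}

theorem exists_mem_arm_of_mapsLocalArm (hT : IsUniqueArcs arc) (h : MapsLocalArm φ x C D) :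
    ∃ y ∈ C, φ y ∈ D := by
  obtain ⟨hC, -, U, hU, hUD⟩ := h
  obtain ⟨y, hy, hyU⟩ := hT.exists_mem_arm_arc_subset hC hU
  exact ⟨y, hy, hUD ⟨y, ⟨hy, hyU (hT.right_mem x y)⟩, rfl⟩⟩

theorem mapsLocalArm_unique (hT : IsUniqueArcs arc) (hD : MapsLocalArm φ x C D)
    (hE : MapsLocalArm φ x C E) : D = E := by
  obtain ⟨hC, hDarm, U, hU, hUD⟩ := hD
  obtain ⟨-, hEarm, V, hV, hVE⟩ := hE
  obtain ⟨y, hy, hyUV⟩ := hT.exists_mem_arm_arc_subset hC (inter_mem hU hV)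
  have hyUV := hyUV (hT.right_mem x y)
  exact arm_eq_of_mem_of_mem hDarm hEarm (hUD (mem_image_of_mem φ ⟨hy, hyUV.1⟩))
    (hVE (mem_image_of_mem φ ⟨hy, hyUV.2⟩))

theorem image_arm_subset (hT : IsUniqueArcs arc) (hφ : Continuous φ)
    (hi : InjOn φ (insert x C)) (h : MapsLocalArm φ x C D) : φ '' C ⊆ D := by
  obtain ⟨y, hy, hyD⟩ := hT.exists_mem_arm_of_mapsLocalArm h
  refine subset_arm h.2.1 ((isPreconnected_arm h.1).image φ hφ.continuousOn)
    (mem_image_of_mem φ hy) hyD ?_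
  rintro ⟨p, hp, hpx⟩
  exact ne_of_mem_arm h.1 hp (hi (.inr hp) (.inl rfl) hpx)

end IsUniqueArcs

namespace IsFiniteTree

variable {arc : X → X → Set X} {φ ψ : X → X} {x y : X} {C D E : Set X}

theorem mapsLocalArm_of_injOn_arc (hT : IsFiniteTree arc) (hφ : Continuous φ) (hC : C ∈ arms x)
    (hy : y ∈ C) (hi : InjOn φ (arc x y)) : MapsLocalArm φ x C (armTo (φ x) (φ y)) := by
  have hne : φ y ≠ φ x := fun h =>
    ne_of_mem_arm hC hy (hi (hT.right_mem x y) (hT.left_mem x y) h)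
  refine mapsLocalArm_iff_eventually.2 ⟨hC, armTo_mem_arms hne, ?_⟩
  filter_upwards [hT.eventually_mem_arc hC hy] with p hp hpC
  have hφp : φ p ∈ arc (φ x) (φ y) :=
    hT.image_arc hT.toIsUniqueArcs hφ hi ▸ mem_image_of_mem φ (hp hpC)
  exact hT.arc_diff_subset_arm (armTo_mem_arms hne) (mem_armTo hne)
    ⟨hφp, fun h => ne_of_mem_arm hC hpC (hi (hp hpC) (hT.left_mem x y) h)⟩

theorem map_mem_of_mapsLocalArm (hT : IsFiniteTree arc) (hφ : Continuous φ)
    (h : MapsLocalArm φ x C D) (hy : y ∈ C) (hi : InjOn φ (arc x y)) : φ y ∈ D := by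
  rw [hT.mapsLocalArm_unique h (hT.mapsLocalArm_of_injOn_arc hφ h.1 hy hi)]
  exact mem_armTo fun hxy => ne_of_mem_arm h.1 hy (hi (hT.right_mem x y) (hT.left_mem x y) hxy)

theorem exists_mapsLocalArm (hT : IsFiniteTree arc) (hφ : Continuous φ)
    (hl : LocallyInjectiveAt φ x) (hC : C ∈ arms x) : ∃ D, MapsLocalArm φ x C D := by
  obtain ⟨U, hU, hi⟩ := hl
  obtain ⟨y, hy, hyU⟩ := hT.exists_mem_arm_arc_subset hC hU
  exact ⟨_, hT.mapsLocalArm_of_injOn_arc hφ hC hy (hi.mono hyU)⟩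

theorem mapsLocalArm_of_comp (hT : IsFiniteTree arc) (hφ : Continuous φ) (hψ : Continuous ψ)
    (hl : LocallyInjectiveAt ψ (φ x)) (hD : MapsLocalArm φ x C D)
    (hE : MapsLocalArm (ψ ∘ φ) x C E) : MapsLocalArm ψ (φ x) D E := by
  obtain ⟨E', hE'⟩ := hT.exists_mapsLocalArm hψ hl hD.2.1
  exact hT.mapsLocalArm_unique (hE'.comp hD hφ.continuousAt) hE ▸ hE'

theorem mapsLocalArm_injective (hT : IsFiniteTree arc) (hφ : Continuous φ)
    (hl : LocallyInjectiveAt φ x) (hC : MapsLocalArm φ x C E) (hD : MapsLocalArm φ x D E) :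
    C = D := by
  obtain ⟨U, hU, hi⟩ := hl
  have hstart : ∀ {B}, MapsLocalArm φ x B E →
      ∃ y ∈ B, φ y ∈ E ∧ arc x y ⊆ U ∧ arc (φ x) (φ y) = φ '' arc x y := by
    rintro B ⟨hB, -, V, hV, hVE⟩
    obtain ⟨y, hy, hyUV⟩ := hT.exists_mem_arm_arc_subset hB (inter_mem hU hV)
    have hyU : arc x y ⊆ U := hyUV.trans inter_subset_left
    exact ⟨y, hy, hVE (mem_image_of_mem φ ⟨hy, (hyUV (hT.right_mem x y)).2⟩), hyU,
      (hT.image_arc hT.toIsUniqueArcs hφ (hi.mono hyU)).symm⟩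
  obtain ⟨c, hcC, hcE, hcU, hc⟩ := hstart hC
  obtain ⟨d, hdD, hdE, hdU, hd⟩ := hstart hD
  obtain ⟨w, hwx, hwc, hwd⟩ := hT.shareInitialArc_of_mem_arm hC.2.1 hcE hdE
  rw [hc] at hwc
  rw [hd] at hwd
  obtain ⟨p, hpc, rfl⟩ := hwc
  obtain ⟨p', hpd, hpp'⟩ := hwd
  obtain rfl : p' = p := hi (hdU hpd) (hcU hpc) hpp'
  exact hT.arm_eq_of_shareInitialArc hC.1 hD.1 hcC hdD
    ⟨p', fun h => hwx (congrArg φ h), hpc, hpd⟩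

theorem exists_isArmReturnMap (hT : IsFiniteTree arc) (hφ : Continuous φ)
    (hl : LocallyInjectiveAt φ x) (hx : φ x = x) :
    ∃ π : arms x → arms x, Injective π ∧ IsArmReturnMap φ x π := by
  have hex : ∀ C : arms x, ∃ D : arms x, MapsLocalArm φ x C D := fun C =>
    let ⟨D, hD⟩ := hT.exists_mapsLocalArm hφ hl C.2
    ⟨⟨D, hx ▸ hD.2.1⟩, hD⟩
  choose π hπ using hex
  exact ⟨π, fun C D hCD => Subtype.ext
    (hT.mapsLocalArm_injective hφ hl (hπ C) (hCD ▸ hπ D)), hπ⟩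

end IsFiniteTree

theorem IsArmReturnMap.armsTransitive_iff {arc : X → X → Set X} (hT : IsUniqueArcs arc)
    {f : X → X} {n : ℕ} {z : X} {π : arms z → arms z} (h : IsArmReturnMap f^[n] z π)
    (hz : f^[n] z = z) (hf : Continuous f) :
    ArmsTransitive f n z ↔ ∀ C D, ∃ j, π^[j] C = D := by
  have hiter (j : ℕ) (C : arms z) : MapsLocalArm f^[n * j] z C (π^[j] C) :=
    iterate_mul f n j ▸ h.iterate hz (hf.iterate n) j C
  constructor
  · intro htrans C D
    obtain ⟨j, hj⟩ := htrans C C.2 D D.2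
    exact ⟨j, Subtype.ext (hT.mapsLocalArm_unique (hiter j C) hj)⟩
  · intro htrans C hC D hD
    obtain ⟨j, hj⟩ := htrans ⟨C, hC⟩ ⟨D, hD⟩
    exact ⟨j, by simpa only [hj] using hiter j ⟨C, hC⟩⟩

/-! ### Dynamics on a Hubbard tree -/

namespace HubbardTree

variable (H : HubbardTree X) {x y z : X} {C D E : Set X} {n : ℕ}

theorem isFiniteTree : IsFiniteTree H.arc where
  t2 := H.t2
  isArcBetween := H.arc_isArc
  eq_arc := H.arc_unique
  compactSpace := H.compact
  arms_finite := H.arms_finite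
  endpoint_finite := H.endpoint_finite

theorem locallyInjectiveAt_f (hx : x ≠ H.c0) : LocallyInjectiveAt H.f x :=
  let ⟨U, hU, hxU, hemb⟩ := H.local_homeo x hx
  ⟨U, hU.mem_nhds hxU, injOn_iff_injective.2 hemb.injective⟩

theorem locallyInjectiveAt_iterate {m : ℕ} (hx : ∀ j < m, H.f^[j] x ≠ H.c0) :
    LocallyInjectiveAt H.f^[m] x := by
  induction m with
  | zero => exact ⟨univ, univ_mem, injective_id.injOn⟩
  | succ m ih =>
    rw [iterate_succ']
    exact (H.locallyInjectiveAt_f (hx m m.lt_succ_self)).comp (ih fun j hj => hx j (by omega))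
      (H.cont.iterate m).continuousAt

theorem injOn_f_arc (h : H.c0 ∈ H.arc x y → H.c0 = x ∨ H.c0 = y) : InjOn H.f (H.arc x y) := by
  refine H.isFiniteTree.injOn_arc H.isFiniteTree.toIsUniqueArcs H.cont fun p hp hpx hpy =>
    H.locallyInjectiveAt_f ?_
  rintro rfl
  exact (h hp).elim hpx hpy

theorem injOn_iterate_insert_arm (hC : C ∈ arms x) {m : ℕ} (hx : ∀ j < m, H.f^[j] x ≠ H.c0)
    (hm : ∀ j < m, H.c0 ∉ H.f^[j] '' C) : InjOn H.f^[m] (insert x C) := by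
  have hT := H.isFiniteTree
  intro a ha b hb hab
  refine hT.injOn_arc hT.toIsUniqueArcs (H.cont.iterate m) (fun p hp _ _ => ?_)
    (hT.left_mem a b) (hT.right_mem a b) hab
  rcases hT.arc_subset_insert_arm_of_mem_of_mem hC ha hb hp with rfl | hpC
  · exact H.locallyInjectiveAt_iterate hx
  · exact H.locallyInjectiveAt_iterate fun j hj h => hm j hj ⟨p, hpC, h⟩

theorem f_mem_of_mapsLocalArm (hx : x ≠ H.c0) (h : MapsLocalArm H.f x C D) (hy : y ∈ C)
    (hc : H.c0 ∈ C → H.c0 = y) : H.f y ∈ D := by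
  refine H.isFiniteTree.map_mem_of_mapsLocalArm H.cont h hy (H.injOn_f_arc fun hmem => .inr ?_)
  exact hc ((H.isFiniteTree.arc_subset_insert_arm h.1 hy hmem).resolve_left hx.symm)

theorem exists_c0_mem_image_iterate (hz : IsBranchPt z) (horbit : ∀ j, H.f^[j] z ≠ H.c0)
    (hC : C ∈ arms z) : ∃ m, H.c0 ∈ H.f^[m] '' C := by
  obtain ⟨e, heC, he⟩ := H.isFiniteTree.exists_isEndpoint_mem_arm hC
  obtain ⟨m, p, hp, hpc⟩ := H.expansive z e (ne_of_mem_arm hC heC).symm (.inl hz)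
    (.inr (H.endpoints_on_orbit e he))
  refine ⟨m, p, (H.isFiniteTree.arc_subset_insert_arm hC heC hp).resolve_left ?_, hpc⟩
  rintro rfl
  exact horbit m hpc

theorem exists_mapsLocalArm_iterate (horbit : ∀ j, H.f^[j] z ≠ H.c0) (hC : C ∈ arms z) (m : ℕ) :
    ∃ D, MapsLocalArm H.f^[m] z C D :=
  H.isFiniteTree.exists_mapsLocalArm (H.cont.iterate m)
    (H.locallyInjectiveAt_iterate fun j _ => horbit j) hC

theorem mapsLocalArm_iterate_of_add (horbit : ∀ j, H.f^[j] z ≠ H.c0) {k m : ℕ}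
    (hD : MapsLocalArm H.f^[m] z C D) (hE : MapsLocalArm H.f^[k + m] z C E) :
    MapsLocalArm H.f^[k] (H.f^[m] z) D E := by
  rw [iterate_add] at hE
  refine H.isFiniteTree.mapsLocalArm_of_comp (H.cont.iterate m) (H.cont.iterate k)
    (H.locallyInjectiveAt_iterate fun j _ => ?_) hD hE
  rw [← iterate_add_apply]
  exact horbit (j + m)

theorem image_iterate_arm_subset (horbit : ∀ j, H.f^[j] z ≠ H.c0) {m : ℕ}
    (hm : ∀ j < m, H.c0 ∉ H.f^[j] '' C) (h : MapsLocalArm H.f^[m] z C D) :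
    H.f^[m] '' C ⊆ D :=
  H.isFiniteTree.image_arm_subset (H.cont.iterate m)
    (H.injOn_iterate_insert_arm h.1 (fun j _ => horbit j) hm) h

theorem exists_mapsLocalArm_c0_mem (hz : IsBranchPt z) (horbit : ∀ j, H.f^[j] z ≠ H.c0)
    (hC : C ∈ arms z) : ∃ m D, MapsLocalArm H.f^[m] z C D ∧ H.c0 ∈ D := by
  classical
  have hex := H.exists_c0_mem_image_iterate hz horbit hC
  obtain ⟨D, hD⟩ := H.exists_mapsLocalArm_iterate horbit hC (Nat.find hex)
  exact ⟨Nat.find hex, D, hD,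
    H.image_iterate_arm_subset horbit (fun j => Nat.find_min hex) hD (Nat.find_spec hex)⟩

/-! ### The characteristic point -/

namespace IsCharacteristic

variable {H}

theorem c0_ne (hchar : H.IsCharacteristic z) : H.c0 ≠ z :=
  let ⟨_, _, _, hCz, _, _, hc0, _⟩ := hchar
  ne_of_mem_arm hCz hc0

theorem c1_ne (hchar : H.IsCharacteristic z) : H.c1 ≠ z :=
  let ⟨_, _, hCv, _, _, hc1, _, _⟩ := hchar
  ne_of_mem_arm hCv hc1

theorem armTo_c0_ne (hchar : H.IsCharacteristic z) : armTo z H.c0 ≠ armTo z H.c1 :=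
  let ⟨_, _, hCv, hCz, hne, hc1, hc0, _⟩ := hchar
  eq_armTo_of_mem hCv hc1 ▸ eq_armTo_of_mem hCz hc0 ▸ hne.symm

theorem iterate_mem_armTo_c0 (hchar : H.IsCharacteristic z) {k : ℕ} (hk : H.f^[k] z ≠ z) :
    H.f^[k] z ∈ armTo z H.c0 :=
  let ⟨_, _, _, hCz, _, _, hc0, horbit⟩ := hchar
  eq_armTo_of_mem hCz hc0 ▸ horbit k hk

theorem iterate_notMem_armTo_c1 (hchar : H.IsCharacteristic z) (k : ℕ) :
    H.f^[k] z ∉ armTo z H.c1 := by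
  intro h
  have hk : H.f^[k] z ≠ z := ne_of_mem_arm (armTo_mem_arms hchar.c1_ne) h
  exact hchar.armTo_c0_ne (arm_eq_of_mem_of_mem (armTo_mem_arms hchar.c0_ne)
    (armTo_mem_arms hchar.c1_ne) (hchar.iterate_mem_armTo_c0 hk) h)

theorem iterate_ne_c0 (hchar : H.IsCharacteristic z) (k : ℕ) : H.f^[k] z ≠ H.c0 := by
  intro h
  have hc1 : H.f^[k + 1] z = H.c1 := by rw [iterate_succ_apply', h, c1]
  have hmem := mem_armTo hchar.c1_ne
  exact hchar.iterate_notMem_armTo_c1 (k + 1) (by rwa [hc1])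

theorem mem_arm_of_c1_mem (hchar : H.IsCharacteristic z) {i : ℕ} (hi : H.f^[i] z ≠ z)
    (hE : E ∈ arms (H.f^[i] z)) (hc1 : H.c1 ∈ E) : z ∈ E := by
  have hv := armTo_mem_arms hchar.c1_ne
  exact subset_arm hE (H.isFiniteTree.isPreconnected_insert_arm hv)
    (.inr (mem_armTo hchar.c1_ne)) hc1
    (not_or.2 ⟨hi, hchar.iterate_notMem_armTo_c1 i⟩) (.inl rfl)

end IsCharacteristic

/-- `E` points towards the critical value or towards a point of the orbit of `z`. Along the orbit
of `z` this property of a local arm persists until the return to `z`. -/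
def IsOrbitArm (z : X) (E : Set X) : Prop :=
  H.c1 ∈ E ∨ ∃ k, H.f^[k] z ∈ E

namespace IsCharacteristic

variable {H}

theorem isOrbitArm_succ (hchar : H.IsCharacteristic z) {i : ℕ}
    (hCD : MapsLocalArm H.f^[i] z C D) (hCE : MapsLocalArm H.f^[i + 1] z C E)
    (hD : H.c0 ∈ D ∨ H.f^[i] z ≠ z ∧ H.IsOrbitArm z D) : H.IsOrbitArm z E := by
  have h : MapsLocalArm H.f (H.f^[i] z) D E :=
    H.mapsLocalArm_iterate_of_add (k := 1) hchar.iterate_ne_c0 hCD (add_comm i 1 ▸ hCE)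
  by_cases hc0 : H.c0 ∈ D
  · exact .inl (H.f_mem_of_mapsLocalArm (hchar.iterate_ne_c0 i) h hc0 fun _ => rfl)
  obtain ⟨hi, hD⟩ := hD.resolve_left hc0
  obtain ⟨k, hk⟩ : ∃ k, H.f^[k] z ∈ D :=
    hD.elim (fun hc1 => ⟨0, hchar.mem_arm_of_c1_mem hi h.1 hc1⟩) id
  have hfk := H.f_mem_of_mapsLocalArm (hchar.iterate_ne_c0 i) h hk fun hc => (hc0 hc).elim
  exact .inr ⟨k + 1, by rwa [iterate_succ_apply']⟩

theorem c0_mem_or_c1_mem (hchar : H.IsCharacteristic z) (hper : ExactPeriod H.f z n) {i : ℕ}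
    (hi : i < n) (hD : MapsLocalArm H.f^[i] z C D) (hc0 : H.c0 ∈ D)
    (hE : MapsLocalArm H.f^[n] z C E) : H.c0 ∈ E ∨ H.c1 ∈ E := by
  have hlater : ∀ k, i + 1 ≤ k → k ≤ n → ∀ B, MapsLocalArm H.f^[k] z C B → H.IsOrbitArm z B := by
    intro k hk
    induction k, hk using Nat.le_induction with
    | base => exact fun _ B hB => hchar.isOrbitArm_succ hD hB (.inl hc0)
    | succ k hk ih =>
      intro hkn B hB
      obtain ⟨A, hA⟩ := H.exists_mapsLocalArm_iterate hchar.iterate_ne_c0 hD.1 k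
      exact hchar.isOrbitArm_succ hA hB
        (.inr ⟨hper.2.2 k (by omega) (by omega), ih (by omega) A hA⟩)
  have hEz : E ∈ arms z := hper.2.1 ▸ hE.2.1
  rcases hlater n hi le_rfl E hE with hc1 | ⟨k, hk⟩
  · exact .inr hc1
  · rw [arm_eq_of_mem_of_mem hEz (armTo_mem_arms hchar.c0_ne) hk
      (hchar.iterate_mem_armTo_c0 (ne_of_mem_arm hEz hk))]
    exact .inl (mem_armTo hchar.c0_ne)

theorem c0_notMem_image_iterate (hchar : H.IsCharacteristic z) (hper : ExactPeriod H.f z n)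
    (hE : MapsLocalArm H.f^[n] z C E) (hc0 : H.c0 ∉ E) (hc1 : H.c1 ∉ E) :
    ∀ j < n, H.c0 ∉ H.f^[j] '' C := by
  intro j
  induction j using Nat.strong_induction_on with
  | _ j ih =>
    intro hj hmem
    obtain ⟨D, hD⟩ := H.exists_mapsLocalArm_iterate hchar.iterate_ne_c0 hE.1 j
    have hsub := H.image_iterate_arm_subset hchar.iterate_ne_c0
      (fun i hi => ih i hi (hi.trans hj)) hD
    exact (hchar.c0_mem_or_c1_mem hper hj hD (hsub hmem) hE).elim hc0 hc1

variable {π : arms z → arms z}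

theorem exists_iterate_c0_mem_or_c1_mem (hchar : H.IsCharacteristic z) (hz : IsBranchPt z)
    (hper : ExactPeriod H.f z n) (hπ : IsArmReturnMap H.f^[n] z π) (C : arms z) :
    ∃ j, H.c0 ∈ (π^[j] C : Set X) ∨ H.c1 ∈ (π^[j] C : Set X) := by
  obtain ⟨m, D, hD, hc0⟩ := H.exists_mapsLocalArm_c0_mem hz hchar.iterate_ne_c0 C.2
  have hret : MapsLocalArm H.f^[n * (m / n)] z C (π^[m / n] C) :=
    iterate_mul H.f n (m / n) ▸ hπ.iterate hper.2.1 (H.cont.iterate n) (m / n) C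
  have hfix : H.f^[n * (m / n)] z = z := by
    rw [iterate_mul, iterate_fixed hper.2.1]
  have hrest : MapsLocalArm H.f^[m % n] z (π^[m / n] C) D := by
    rw [← Nat.mod_add_div m n] at hD
    simpa only [hfix] using H.mapsLocalArm_iterate_of_add hchar.iterate_ne_c0 hret hD
  refine ⟨m / n + 1, ?_⟩
  rw [iterate_succ_apply']
  exact hchar.c0_mem_or_c1_mem hper (Nat.mod_lt m hper.1) hrest hc0 (hπ _)

theorem exists_mapsLocalArm_c0_notMem (hchar : H.IsCharacteristic z) (hz : H.f^[n] z = z)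
    (hfix : MapsLocalArm H.f^[n] z D D) (hD : H.c0 ∈ D) (hC : C ∈ arms z) (hc0 : H.c0 ∉ C) :
    ∃ E ∈ arms z, H.c0 ∉ E ∧ MapsLocalArm H.f^[n] z C E := by
  obtain ⟨E, hE⟩ := H.exists_mapsLocalArm_iterate hchar.iterate_ne_c0 hC n
  have hEz : E ∈ arms z := hz ▸ hE.2.1
  refine ⟨E, hEz, fun hcE => hc0 ?_, hE⟩
  obtain rfl : E = D := arm_eq_of_mem_of_mem hEz hfix.1 hcE hD
  rwa [H.isFiniteTree.mapsLocalArm_injective (H.cont.iterate n)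
    (H.locallyInjectiveAt_iterate fun j _ => hchar.iterate_ne_c0 j) hE hfix]

-- Otherwise the arm of `c₁` would never meet `c₀` under iteration.
theorem exists_c0_mem_image_iterate_lt (hchar : H.IsCharacteristic z) (hz : IsBranchPt z)
    (hper : ExactPeriod H.f z n) (hfix : MapsLocalArm H.f^[n] z D D) (hD : H.c0 ∈ D) :
    ∃ C ∈ arms z, H.c0 ∉ C ∧ ∃ k < n, H.c0 ∈ H.f^[k] '' C := by
  by_contra! hno
  have hstay : ∀ (a : ℕ), ∀ C ∈ arms z, H.c0 ∉ C →
      ∃ E ∈ arms z, H.c0 ∉ E ∧ H.f^[n * a] '' C ⊆ E := by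
    intro a
    induction a with
    | zero => exact fun C hC hc0 => ⟨C, hC, hc0, by simp⟩
    | succ a ih =>
      intro C hC hc0
      obtain ⟨B, hB, hcB, hCB⟩ := hchar.exists_mapsLocalArm_c0_notMem hper.2.1 hfix hD hC hc0
      obtain ⟨E, hE, hcE, hsub⟩ := ih B hB hcB
      refine ⟨E, hE, hcE, ?_⟩
      rw [mul_add_one, iterate_add, image_comp]
      exact (image_mono (H.image_iterate_arm_subset hchar.iterate_ne_c0 (hno C hC hc0) hCB)).trans
        hsub
  have hv := armTo_mem_arms hchar.c1_ne
  obtain ⟨m, hm⟩ := H.exists_c0_mem_image_iterate hz hchar.iterate_ne_c0 hv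
  obtain ⟨E, hE, hcE, hsub⟩ := hstay (m / n) _ hv fun h =>
    hchar.armTo_c0_ne (eq_armTo_of_mem hv h).symm
  rw [← Nat.mod_add_div m n, iterate_add, image_comp] at hm
  exact hno E hE hcE (m % n) (Nat.mod_lt m hper.1) (image_mono hsub hm)

end IsCharacteristic

theorem lt_of_c0_notMem_image_iterate (hC : H.c1 ∈ C) (hn : ∀ j < n, H.c0 ∉ H.f^[j] '' C) {p : ℕ}
    (hp : ExactPeriod H.f H.c0 p) : n < p := by
  obtain ⟨hp1, hpc, -⟩ := hp
  obtain ⟨m, rfl⟩ := Nat.exists_eq_add_of_le' hp1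
  by_contra! hle
  exact hn m hle ⟨H.c1, hC, by rwa [iterate_succ_apply] at hpc⟩

end HubbardTree

/-! ### Labelling along a cycle -/

section Cycle

variable {A : Type*} {π ρ : A → A} {a v : A}

theorem exists_iterate_eq_of_apply_eq_or [Finite A] (hρ : Injective ρ) (hv : ρ a = v)
    (hπρ : ∀ C, ρ C = π C ∨ ρ C = a ∨ ρ C = v) (hreach : ∀ C, ∃ j, π^[j] C = a ∨ π^[j] C = v)
    (C : A) : ∃ j, ρ^[j] C = a := by
  have hreach_v : ∃ j, ρ^[j] v = a := by
    obtain ⟨m, hm, hper⟩ := hρ.mem_periodicPts a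
    obtain ⟨k, rfl⟩ := Nat.exists_eq_add_of_le' hm
    exact ⟨k, by rw [← hv, ← iterate_succ_apply, hper]⟩
  obtain ⟨j, hj⟩ := hreach C
  induction j generalizing C with
  | zero =>
    rcases hj with rfl | rfl
    · exact ⟨0, rfl⟩
    · exact hreach_v
  | succ j ih =>
    suffices ∃ k, ρ^[k] (ρ C) = a from this.imp' (· + 1) fun _ h => h
    rcases hπρ C with h | h | h <;> rw [h]
    · exact ih (π C) hj
    · exact ⟨0, rfl⟩
    · exact hreach_v

theorem minimalPeriod_eq_card_and_bijOn_iterate [Finite A] (hρ : Injective ρ)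
    (hreach : ∀ C, ∃ j, ρ^[j] C = a) : minimalPeriod ρ a = Nat.card A ∧
      BijOn (fun i => ρ^[i] a) (Iio (Nat.card A)) univ := by
  have hsurj : SurjOn (fun i => ρ^[i] a) (Iio (minimalPeriod ρ a)) univ := by
    intro C _
    obtain ⟨j, hj⟩ := hreach C
    obtain ⟨m, hm, hper⟩ := hρ.mem_periodicPts C
    have hC : ρ^[m * j - j] a = C := by
      rw [← hj, ← iterate_add_apply, Nat.sub_add_cancel (Nat.le_mul_of_pos_left j hm)]
      exact hper.mul_const j
    exact ⟨_, Nat.mod_lt _ (minimalPeriod_pos_of_mem_periodicPts (hρ.mem_periodicPts a)),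
      (iterate_mod_minimalPeriod_eq ..).trans hC⟩
  have hbij : BijOn (fun i => ρ^[i] a) (Iio (minimalPeriod ρ a)) univ :=
    ⟨mapsTo_univ _ _, iterate_injOn_Iio_minimalPeriod, hsurj⟩
  have hcard : minimalPeriod ρ a = Nat.card A := by
    rw [← ncard_univ, ← hbij.image_eq, hbij.injOn.ncard_image, ncard_Iio_nat]
  exact ⟨hcard, hcard ▸ hbij⟩

theorem forall_exists_iterate_eq_iff [Finite A] (hπ : Injective π) (hav : a ≠ v)
    (ha : π a = a ∨ π a = v) (hreach : ∀ C, ∃ j, π^[j] C = a ∨ π^[j] C = v) :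
    (∀ C D, ∃ j, π^[j] C = D) ↔ π a = v := by
  refine ⟨fun htrans => ha.resolve_left fun hfix => ?_, fun hv C D => ?_⟩
  · obtain ⟨j, hj⟩ := htrans a v
    exact hav ((iterate_fixed hfix j).symm.trans hj)
  · have hreach_a := exists_iterate_eq_of_apply_eq_or hπ hv (fun _ => .inl rfl) hreach
    obtain ⟨i, -, hi⟩ := (minimalPeriod_eq_card_and_bijOn_iterate hπ hreach_a).2.surjOn (mem_univ D)
    obtain ⟨j, hj⟩ := hreach_a C
    exact ⟨i + j, by rw [iterate_add_apply, hj]; exact hi⟩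

-- Composing `π` with the transposition of `π a` and `v` gives a single cycle through `a` and `v`,
-- along which the elements are labelled.
theorem exists_labelling [Finite A] (hπ : Injective π) (ha : π a = a ∨ π a = v)
    (hreach : ∀ C, ∃ j, π^[j] C = a ∨ π^[j] C = v) :
    ∃ G : ℕ → A, BijOn G (Iio (Nat.card A)) univ ∧ G 0 = a ∧ G 1 = v ∧
      (∀ i, 1 ≤ i → i + 1 < Nat.card A → π (G i) = G (i + 1)) ∧
      (π a = v → π (G (Nat.card A - 1)) = a) ∧ (π a = a → π (G (Nat.card A - 1)) = v) := by
  classical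
  let ρ : A → A := Equiv.swap (π a) v ∘ π
  have hρ : Injective ρ := (Equiv.swap (π a) v).injective.comp hπ
  have hv : ρ a = v := Equiv.swap_apply_left _ _
  have hπρ (C : A) : π C = Equiv.swap (π a) v (ρ C) := (Equiv.swap_apply_self _ _ _).symm
  have heq {C : A} (h : ρ C ≠ a) (h' : ρ C ≠ v) : π C = ρ C := by
    refine (hπρ C).trans (Equiv.swap_apply_of_ne_of_ne ?_ h')
    rcases ha with ha | ha <;> rwa [ha]
  obtain ⟨hcard, hbij⟩ := minimalPeriod_eq_card_and_bijOn_iterate hρ <|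
    exists_iterate_eq_of_apply_eq_or hρ hv (fun C => by
      by_contra! h
      exact h.1 (heq h.2.1 h.2.2).symm) hreach
  have hsucc (i : ℕ) : ρ (ρ^[i] a) = ρ^[i + 1] a := (iterate_succ_apply' ρ i a).symm
  have hlast : ρ (ρ^[Nat.card A - 1] a) = a := by
    have : Nonempty A := ⟨a⟩
    rw [hsucc, Nat.sub_one_add_one Nat.card_pos.ne', ← hcard, iterate_minimalPeriod]
  refine ⟨fun i => ρ^[i] a, hbij, rfl, hv, fun i hi hiA => ?_, fun h => ?_, fun h => ?_⟩
  · have hinj {j : ℕ} (hj : j < Nat.card A) (h : ρ (ρ^[i] a) = ρ^[j] a) : i + 1 = j :=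
      hbij.injOn hiA hj ((hsucc i).symm.trans h)
    refine (heq (fun h => ?_) fun h => ?_).trans (hsucc i)
    · have := hinj (j := 0) (by omega) h
      omega
    · have := hinj (j := 1) (by omega) (h.trans hv.symm)
      omega
  · rw [hπρ, hlast, h, Equiv.swap_self, Equiv.refl_apply]
  · rw [hπρ, hlast, h, Equiv.swap_apply_left]

end Cycle

/-! ### Labelling the arms at the characteristic point -/

namespace HubbardTree

/-- `G 0, …, G (q - 1)` are the global arms at `z`, starting with those of `c₀` and `c₁`; `f^[n]`
shifts the local arms of index `1, …, q - 2` and acts on the other two according to whether the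
orbit of `z` is tame or evil. The values `G i` with `q ≤ i` are arbitrary. -/
structure IsReturnLabelling (H : HubbardTree X) (n q : ℕ) (z : X) (G : ℕ → Set X) : Prop where
  bijOn : BijOn G (Iio q) (arms z)
  c0_mem : H.c0 ∈ G 0
  c1_mem : H.c1 ∈ G 1
  succ : ∀ i, 1 ≤ i → i + 1 < q → MapsLocalArm H.f^[n] z (G i) (G (i + 1))
  tame : ArmsTransitive H.f n z →
    MapsLocalArm H.f^[n] z (G 0) (G 1) ∧ MapsLocalArm H.f^[n] z (G (q - 1)) (G 0)
  evil : ¬ ArmsTransitive H.f n z →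
    MapsLocalArm H.f^[n] z (G 0) (G 0) ∧ MapsLocalArm H.f^[n] z (G (q - 1)) (G 1)

variable {H : HubbardTree X} {z : X} {n q : ℕ} {G : ℕ → Set X}

theorem IsCharacteristic.exists_isReturnLabelling (hchar : H.IsCharacteristic z)
    (hz : IsBranchPt z) (hper : ExactPeriod H.f z n) :
    ∃ G, H.IsReturnLabelling n (arms z).ncard z G := by
  have hT := H.isFiniteTree
  have := (H.arms_finite z).to_subtype
  obtain ⟨π, hinj, hπ⟩ := hT.exists_isArmReturnMap (H.cont.iterate n)
    (H.locallyInjectiveAt_iterate fun j _ => hchar.iterate_ne_c0 j) hper.2.1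
  let a : arms z := ⟨armTo z H.c0, armTo_mem_arms hchar.c0_ne⟩
  let v : arms z := ⟨armTo z H.c1, armTo_mem_arms hchar.c1_ne⟩
  have hav : a ≠ v := fun h => hchar.armTo_c0_ne (congrArg Subtype.val h)
  have eq_or {C : arms z} (h : H.c0 ∈ (C : Set X) ∨ H.c1 ∈ (C : Set X)) : C = a ∨ C = v :=
    h.imp (fun h => Subtype.ext (eq_armTo_of_mem C.2 h))
      fun h => Subtype.ext (eq_armTo_of_mem C.2 h)
  have ha : π a = a ∨ π a = v := eq_or <|
    hchar.c0_mem_or_c1_mem hper hper.1 (mapsLocalArm_id a.2) (mem_armTo hchar.c0_ne) (hπ a)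
  have hreach (C : arms z) : ∃ j, π^[j] C = a ∨ π^[j] C = v :=
    (hchar.exists_iterate_c0_mem_or_c1_mem hz hper hπ C).imp fun _ => eq_or
  have htame : ArmsTransitive H.f n z ↔ π a = v :=
    (hπ.armsTransitive_iff hT.toIsUniqueArcs hper.2.1 H.cont).trans
      (forall_exists_iterate_eq_iff hinj hav ha hreach)
  obtain ⟨G, hbij, hG0, hG1, hsucc, hlast_tame, hlast_evil⟩ :=
    exists_labelling hinj ha hreach
  rw [Nat.card_coe_set_eq] at hbij hsucc hlast_tame hlast_evil
  refine ⟨fun i => G i, ?_, ?_, ?_, fun i hi hiq => hsucc i hi hiq ▸ hπ (G i), fun ht => ?_,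
    fun ht => ?_⟩
  · have hval := (Subtype.val_injective (p := (· ∈ arms z))).injOn.bijOn_image (s := univ)
    rw [image_univ, Subtype.range_coe] at hval
    exact hval.comp hbij
  · exact hG0 ▸ mem_armTo hchar.c0_ne
  · exact hG1 ▸ mem_armTo hchar.c1_ne
  · have hv := htame.1 ht
    exact ⟨hG0 ▸ hG1 ▸ hv ▸ hπ a, hG0 ▸ hlast_tame hv ▸ hπ _⟩
  · have hfix := ha.resolve_right (mt htame.2 ht)
    exact ⟨by simpa only [hG0, hfix] using hπ a, hG1 ▸ hlast_evil hfix ▸ hπ _⟩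

namespace IsReturnLabelling

theorem notMem_of_ne (hG : H.IsReturnLabelling n q z G) {i j : ℕ} (hi : i < q) (hj : j < q)
    (hij : i ≠ j) {x : X} (hx : x ∈ G j) : x ∉ G i := fun hx' =>
  hij (hG.bijOn.injOn hi hj
    (arm_eq_of_mem_of_mem (hG.bijOn.mapsTo hi) (hG.bijOn.mapsTo hj) hx' hx))

theorem c0_notMem_image_iterate (hG : H.IsReturnLabelling n q z G) (hchar : H.IsCharacteristic z)
    (hper : ExactPeriod H.f z n) {i : ℕ} (hi : 1 ≤ i) (hiq : i + 1 < q) :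
    ∀ j < n, H.c0 ∉ H.f^[j] '' G i :=
  hchar.c0_notMem_image_iterate hper (hG.succ i hi hiq)
    (hG.notMem_of_ne hiq (by omega) (by omega) hG.c0_mem)
    (hG.notMem_of_ne hiq (by omega) (by omega) hG.c1_mem)

theorem mapsHomeoOn_and_image_subset (hG : H.IsReturnLabelling n q z G)
    (hchar : H.IsCharacteristic z) (hper : ExactPeriod H.f z n) {i : ℕ} (hi : 1 ≤ i)
    (hiq : i + 1 < q) : MapsHomeoOn H.f^[n] (G i) ∧ H.f^[n] '' G i ⊆ G (i + 1) := by
  have := H.t2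
  have := H.compact
  have hc0 := hG.c0_notMem_image_iterate hchar hper hi hiq
  have hmaps := hG.succ i hi hiq
  exact ⟨mapsHomeoOn_of_subset_isCompact (H.cont.iterate n) (isClosed_insert_arm hmaps.1).isCompact
      (subset_insert z _)
      (H.injOn_iterate_insert_arm hmaps.1 (fun j _ => hchar.iterate_ne_c0 j) hc0),
    H.image_iterate_arm_subset hchar.iterate_ne_c0 hc0 hmaps⟩

theorem exists_c0_mem_image_iterate (hG : H.IsReturnLabelling n q z G)
    (hchar : H.IsCharacteristic z) (hz : IsBranchPt z) (hper : ExactPeriod H.f z n)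
    (hevil : ¬ ArmsTransitive H.f n z) : ∃ k < n, H.c0 ∈ H.f^[k] '' G (q - 1) := by
  obtain ⟨C, hC, hc0, k, hk, hkC⟩ :=
    hchar.exists_c0_mem_image_iterate_lt hz hper (hG.evil hevil).1 hG.c0_mem
  obtain ⟨i, hi, rfl⟩ := hG.bijOn.surjOn hC
  have hi0 : i ≠ 0 := fun h => hc0 (h ▸ hG.c0_mem)
  have hlast : ¬ i + 1 < q := fun h =>
    hG.c0_notMem_image_iterate hchar hper (Nat.one_le_iff_ne_zero.2 hi0) h k hk hkC
  have hi : i < q := hi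
  obtain rfl : i = q - 1 := by omega
  exact ⟨k, hk, hkC⟩

end IsReturnLabelling

end HubbardTree

end

/-- Lemma 3.6, "Global Arms at Branch Points Map Homeomorphically".
The global arms at the characteristic point of a periodic orbit of branch points of
exact period `n` with `q ≥ 3` arms can be labelled `G 0, …, G (q-1)` with
`c₀ ∈ G 0`, `c₁ ∈ G 1`, the arms `G 1, …, G (q-2)` mapping homeomorphically into
`G 2, …, G (q-1)` respectively; in the tame case `f^[n]` sends the local arm `L 0`
to `L 1` and `L (q-1)` to `L 0`, and in the evil case it fixes `L 0`, sends
`L (q-1)` to `L 1`, and some iterate `f^[k] (G (q-1))`, `k ≤ n`, contains the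
critical point. In particular, if the critical orbit is periodic, its period
strictly exceeds the period of the branch orbit. -/
theorem global_arms_at_branch_points
    {X : Type*} [TopologicalSpace X] (H : HubbardTree X) (z : X) (n q : ℕ)
    (hchar : H.IsCharacteristic z) (hper : ExactPeriod H.f z n)
    (hbranch : ∀ k : ℕ, IsBranchPt (H.f^[k] z))
    (harms : ∀ k : ℕ, (arms (H.f^[k] z)).ncard = q) (hq : 3 ≤ q) :
    (∃ G : ℕ → Set X,
      (∀ i : ℕ, i < q → G i ∈ arms z) ∧
      (∀ i j : ℕ, i < q → j < q → G i = G j → i = j) ∧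
      (∀ C ∈ arms z, ∃ i : ℕ, i < q ∧ C = G i) ∧
      H.c0 ∈ G 0 ∧ H.c1 ∈ G 1 ∧
      (∀ i : ℕ, 1 ≤ i → i ≤ q - 2 →
        MapsHomeoOn (H.f^[n]) (G i) ∧ H.f^[n] '' G i ⊆ G (i + 1)) ∧
      (ArmsTransitive H.f n z →
        MapsLocalArm (H.f^[n]) z (G 0) (G 1) ∧
        MapsLocalArm (H.f^[n]) z (G (q - 1)) (G 0)) ∧
      (¬ ArmsTransitive H.f n z →
        MapsLocalArm (H.f^[n]) z (G 0) (G 0) ∧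
        MapsLocalArm (H.f^[n]) z (G (q - 1)) (G 1) ∧
        ∃ k : ℕ, k ≤ n ∧ H.c0 ∈ H.f^[k] '' (G (q - 1)))) ∧
    (∀ p : ℕ, ExactPeriod H.f H.c0 p → n < p) := by
  obtain rfl : (arms z).ncard = q := harms 0
  have hz : IsBranchPt z := hbranch 0
  obtain ⟨G, hG⟩ := hchar.exists_isReturnLabelling hz hper
  refine ⟨⟨G, fun _ hi => hG.bijOn.mapsTo hi, fun _ _ hi hj h => hG.bijOn.injOn hi hj h,
    fun C hC => ?_, hG.c0_mem, hG.c1_mem, fun i hi hiq => ?_, hG.tame,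
    fun hevil => ?_⟩, fun p => ?_⟩
  · obtain ⟨i, hi, rfl⟩ := hG.bijOn.surjOn hC
    exact ⟨i, hi, rfl⟩
  · exact hG.mapsHomeoOn_and_image_subset hchar hper hi (by omega)
  · obtain ⟨k, hk, hc0⟩ := hG.exists_c0_mem_image_iterate hchar hz hper hevil
    exact ⟨(hG.evil hevil).1, (hG.evil hevil).2, k, hk.le, hc0⟩
  · exact H.lt_of_c0_notMem_image_iterate hG.c1_mem
      (hG.c0_notMem_image_iterate hchar hper le_rfl hq)

end HubbardTrees
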